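/- arXiv:1706.00518 — 2 statements merged into one kernel-verified Lean document; each statement's English description precedes it below -/
import Mathlib

section
/- Let V be a NonNil finite-dimensional irreducible U_q^+-module of type (1,1). Then there exists a unique □_q-module structure on V such that x_0 acts as the standard generator x and x_2 acts as the standard generator y. Moreover this □_q-module structure is irreducible of type 1. -/
/-!
On an eigenvector `v` of `x` the `q`-Serre relation says that `y v` is killed by the cubic
polynomial in `x` whose roots are the eigenvalue of `v` and its two neighbours. So `x` and `y` act
tridiagonally on each other's eigenspaces and, `V` being irreducible, they form a tridiagonal pair:
the increasing flag of eigenspaces of `y` and the decreasing flag of eigenspaces of `x` are in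
opposite position, and `V` is the direct sum of the components `U n` of the resulting split
decomposition. The `q`-Weyl relations for `x₀`, `x₁` and for `x₁`, `x₂` hold if and only if `x₁`
acts on each `U n` as the inverse of the `n`-th eigenvalue `θ n`, and likewise for `x₃` with the
roles of `x` and `y` exchanged. This gives uniqueness and, as `(θ n)⁻¹ = θ (d - n)`, type 1. For
existence only the Serre relations of `x₁` and `x₃` remain; since `x₁` moves each of the flags
whose intersections are the eigenspaces of `x₃` by at most one step, it acts tridiagonally on these
eigenspaces, which is equivalent to the Serre relation, and vice versa.
-/

noncomputable section

open FreeAlgebra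

variable (F : Type) [Field F]

/-- The defining relations of the algebra `□_q` (Terwilliger), on the free algebra
with generators `x_i`, `i ∈ ℤ/4ℤ`. -/
inductive BoxRel (q : F) : FreeAlgebra F (ZMod 4) → FreeAlgebra F (ZMod 4) → Prop
  | rel1 (i : ZMod 4) : BoxRel q
      (q • (ι F i * ι F (i + 1)) - q⁻¹ • (ι F (i + 1) * ι F i))
      ((q - q⁻¹) • (1 : FreeAlgebra F (ZMod 4)))
  | rel2 (i : ZMod 4) : BoxRel q
      (ι F i ^ 3 * ι F (i + 2) +
        ((q ^ 3 - (q⁻¹) ^ 3) / (q - q⁻¹)) • (ι F i * ι F (i + 2) * ι F i ^ 2))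
      (((q ^ 3 - (q⁻¹) ^ 3) / (q - q⁻¹)) • (ι F i ^ 2 * ι F (i + 2) * ι F i) +
        ι F (i + 2) * ι F i ^ 3)

/-- The algebra `□_q`, presented by generators and relations. -/
abbrev BoxQ (q : F) : Type := RingQuot (BoxRel F q)

/-- The generators `x_i` of `□_q`. -/
def bx (q : F) (i : ZMod 4) : BoxQ F q :=
  RingQuot.mkAlgHom F (BoxRel F q) (ι F i)

/-- `f` acts semisimply: `V` is spanned by the eigenspaces of `f`. -/
def SemisimpleOn {V : Type} [AddCommGroup V] [Module F V] (f : Module.End F V) : Prop :=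
  (⨆ θ : F, Module.End.eigenspace f θ) = ⊤

/-- The set of (distinct) eigenvalues of `f`. -/
def EigSet {V : Type} [AddCommGroup V] [Module F V] (f : Module.End F V) : Set F :=
  {θ : F | Module.End.eigenspace f θ ≠ ⊥}

/-- The representation `π` of `A` on `V` is irreducible. -/
def IsIrrep {A V : Type} [Ring A] [Algebra F A] [AddCommGroup V] [Module F V]
    (π : A →ₐ[F] Module.End F V) : Prop :=
  Nontrivial V ∧ ∀ W : Submodule F V, (∀ a : A, ∀ v ∈ W, π a v ∈ W) → W = ⊥ ∨ W = ⊤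

/-- Isomorphism of representations of `A`. -/
def RepIso {A V W : Type} [Ring A] [Algebra F A] [AddCommGroup V] [Module F V]
    [AddCommGroup W] [Module F W]
    (π : A →ₐ[F] Module.End F V) (π' : A →ₐ[F] Module.End F W) : Prop :=
  ∃ σ : V ≃ₗ[F] W, ∀ (a : A) (v : V), σ (π a v) = π' a (σ v)

/-- The `□_q`-module given by `π` has type `1` and diameter `d`: each generator `x_i`
acts semisimply with set of distinct eigenvalues `{q^(d-2n) : 0 ≤ n ≤ d}`. -/
def Type1Diam (q : F) {V : Type} [AddCommGroup V] [Module F V]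
    (π : BoxQ F q →ₐ[F] Module.End F V) (d : ℕ) : Prop :=
  ∀ i : ZMod 4, SemisimpleOn F (π (bx F q i)) ∧
    EigSet F (π (bx F q i)) =
      {θ : F | ∃ n : ℕ, n ≤ d ∧ θ = q ^ ((d : ℤ) - 2 * (n : ℤ))}

/-- The defining relations of `U_q^+`, the positive part of `U_q(L(sl₂))`;
the standard generators are `x = ι F true` and `y = ι F false`. -/
inductive UqpRel (q : F) : FreeAlgebra F Bool → FreeAlgebra F Bool → Prop
  | relx : UqpRel q
      (ι F true ^ 3 * ι F false +
        ((q ^ 3 - (q⁻¹) ^ 3) / (q - q⁻¹)) • (ι F true * ι F false * ι F true ^ 2))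
      (((q ^ 3 - (q⁻¹) ^ 3) / (q - q⁻¹)) • (ι F true ^ 2 * ι F false * ι F true) +
        ι F false * ι F true ^ 3)
  | rely : UqpRel q
      (ι F false ^ 3 * ι F true +
        ((q ^ 3 - (q⁻¹) ^ 3) / (q - q⁻¹)) • (ι F false * ι F true * ι F false ^ 2))
      (((q ^ 3 - (q⁻¹) ^ 3) / (q - q⁻¹)) • (ι F false ^ 2 * ι F true * ι F false) +
        ι F true * ι F false ^ 3)

/-- The algebra `U_q^+`. -/
abbrev Uqp (q : F) : Type := RingQuot (UqpRel F q)

/-- The standard generator `x` of `U_q^+`. -/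
def ux (q : F) : Uqp F q := RingQuot.mkAlgHom F (UqpRel F q) (ι F true)

/-- The standard generator `y` of `U_q^+`. -/
def uy (q : F) : Uqp F q := RingQuot.mkAlgHom F (UqpRel F q) (ι F false)

section OppositeFlags

variable {α : Type*} [CompleteLattice α] {H G : ℤ → α}

/-- An increasing flag `H` and a decreasing flag `G` in opposite position: they decompose the top
element into the components `H n ⊓ G n`. The flags are indexed by all of `ℤ`, so that a finite flag
is constant outside its range. -/
structure OppositeFlags (H G : ℤ → α) : Prop where
  monotone : Monotone H
  antitone : Antitone G
  disjoint : ∀ ⦃i j : ℤ⦄, i < j → Disjoint (H i) (G j)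
  iSup_inf_eq_top : ⨆ n, H n ⊓ G n = ⊤

namespace OppositeFlags

lemma iSup_ne_le (h : OppositeFlags H G) (n : ℤ) :
    ⨆ (m) (_ : m ≠ n), H m ⊓ G m ≤ H (n - 1) ⊔ G (n + 1) := by
  refine iSup₂_le fun m hm => ?_
  rcases lt_or_gt_of_ne hm with hm | hm
  · exact inf_le_left.trans ((h.monotone (by lia)).trans le_sup_left)
  · exact inf_le_right.trans ((h.antitone (by lia)).trans le_sup_right)

variable [IsModularLattice α]

lemma sup_inf_eq_of_le (h : OppositeFlags H G) {n : ℤ} {a : α} (ha : a ≤ H n) :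
    (a ⊔ G (n + 1)) ⊓ H n = a := by
  rw [sup_inf_assoc_of_le _ ha, inf_comm, (h.disjoint (lt_add_one n)).eq_bot, sup_bot_eq]

lemma iSupIndep_inf (h : OppositeFlags H G) : iSupIndep fun n => H n ⊓ G n := by
  intro n
  refine Disjoint.mono_right (h.iSup_ne_le n) ?_
  rw [disjoint_iff, inf_comm, ← inf_assoc,
    h.sup_inf_eq_of_le (h.monotone (sub_one_lt n).le), (h.disjoint (sub_one_lt n)).eq_bot]

lemma eq_inf_sup_pred (h : OppositeFlags H G) (n : ℤ) : H n = H n ⊓ G n ⊔ H (n - 1) := by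
  have hle : H n ⊓ G n ⊔ H (n - 1) ≤ H n := sup_le inf_le_left (h.monotone (sub_one_lt n).le)
  have htop : H n ⊓ G n ⊔ H (n - 1) ⊔ G (n + 1) = ⊤ := by
    rw [eq_top_iff, ← h.iSup_inf_eq_top, iSup_split_single _ n, sup_assoc]
    exact sup_le_sup_left (h.iSup_ne_le n) _
  rw [← h.sup_inf_eq_of_le hle, htop, top_inf_eq]

lemma inf_eq_sup_pred_inf (h : OppositeFlags H G) {i j : ℤ} (hij : j ≤ i) :
    H i ⊓ G j = H i ⊓ G i ⊔ H (i - 1) ⊓ G j := by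
  conv_lhs => rw [h.eq_inf_sup_pred i]
  exact sup_inf_assoc_of_le _ (inf_le_right.trans (h.antitone hij))

lemma inf_le_iSup_Icc (h : OppositeFlags H G) (i j : ℤ) :
    H i ⊓ G j ≤ ⨆ n ∈ Set.Icc j i, H n ⊓ G n := by
  rcases lt_or_ge i j with hij | hij
  · exact (h.disjoint hij).eq_bot.trans_le bot_le
  · rw [h.inf_eq_sup_pred_inf hij]
    refine sup_le (le_biSup (fun n => H n ⊓ G n) (Set.mem_Icc.2 ⟨hij, le_rfl⟩)) ?_
    exact (h.inf_le_iSup_Icc (i - 1) j).trans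
      (biSup_mono fun n hn => ⟨hn.1, hn.2.trans (sub_one_lt i).le⟩)
termination_by (i + 1 - j).toNat

end OppositeFlags

end OppositeFlags

section DirectSum

variable {R M N κ : Type*} [Ring R] [AddCommGroup M] [Module R M] [AddCommGroup N] [Module R N]
  {U : κ → Submodule R M}

lemma exists_linearMap_forall_apply_eq (hU : iSupIndep U) (hU' : ⨆ n, U n = ⊤)
    (φ : ∀ n, U n →ₗ[R] N) : ∃ f : M →ₗ[R] N, ∀ n (u : U n), f u = φ n u := by
  classical
  have hint := DirectSum.isInternal_submodule_of_iSupIndep_of_iSup_eq_top hU hU'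
  let e := LinearEquiv.ofBijective (DirectSum.coeLinearMap U) hint
  refine ⟨DirectSum.toModule R κ N φ ∘ₗ e.symm.toLinearMap, fun n u => ?_⟩
  have he : e.symm u = DirectSum.lof R κ (fun n => U n) n u := by
    rw [LinearEquiv.symm_apply_eq]
    exact (DirectSum.coeLinearMap_lof U n u).symm
  simp [he]

lemma linearMap_ext_of_iSup_eq_top (hU : ⨆ n, U n = ⊤) {f g : M →ₗ[R] N}
    (h : ∀ n, ∀ u ∈ U n, f u = g u) : f = g :=
  LinearMap.eqLocus_eq_top.1 (eq_top_iff.2 (hU.ge.trans (iSup_le h)))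

end DirectSum

section EigenSum

variable {K V κ : Type*} [Field K] [AddCommGroup V] [Module K V]
  {θ : κ → K} {s t : Set κ} {n : κ} {f : Module.End K V} {v : V}

/-- The sum of the eigenspaces of `f` for the eigenvalues `θ n`, `n ∈ s`. For `κ = ℤ` the sets
`Set.Iic i` and `Set.Ici j` yield the two flags attached to an ordering of the eigenspaces. -/
def eigenSum (θ : κ → K) (f : Module.End K V) (s : Set κ) : Submodule K V :=
  ⨆ n ∈ s, f.eigenspace (θ n)

lemma eigenspace_le_eigenSum (hn : n ∈ s) : f.eigenspace (θ n) ≤ eigenSum θ f s :=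
  le_biSup (fun n => f.eigenspace (θ n)) hn

lemma eigenSum_mono (hst : s ⊆ t) : eigenSum θ f s ≤ eigenSum θ f t := biSup_mono hst

lemma iSupIndep_eigenspace_comp (hθ : Function.Injective θ) :
    iSupIndep fun n => f.eigenspace (θ n) :=
  f.eigenspaces_iSupIndep.comp hθ

lemma disjoint_eigenSum (hθ : Function.Injective θ) (hst : Disjoint s t) :
    Disjoint (eigenSum θ f s) (eigenSum θ f t) :=
  (iSupIndep_eigenspace_comp hθ).disjoint_biSup_biSup hst

lemma apply_mem_of_mem_eigenSum {W : Submodule K V} (g : Module.End K V)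
    (h : ∀ n ∈ s, ∀ v ∈ f.eigenspace (θ n), g v ∈ W) (hv : v ∈ eigenSum θ f s) : g v ∈ W := by
  have hle : eigenSum θ f s ≤ W.comap g := iSup₂_le h
  exact hle hv

lemma apply_sub_smul_mem_eigenSum {g : Module.End K V} {c : κ → K}
    (h : ∀ m ∈ s, ∀ v ∈ f.eigenspace (θ m), g v - c m • v ∈ eigenSum θ f t)
    (hst : s \ {n} ⊆ t) (hv : v ∈ eigenSum θ f s) : g v - c n • v ∈ eigenSum θ f t := by
  refine apply_mem_of_mem_eigenSum (g - c n • 1) (fun m hm v hv => ?_) hv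
  have hgv : (g - c n • 1) v = (g v - c m • v) + (c m - c n) • v := by
    simp [sub_smul]
  rw [hgv]
  refine Submodule.add_mem _ (h m hm v hv) ?_
  by_cases hmn : m = n
  · simp [hmn]
  · exact Submodule.smul_mem _ _ (eigenspace_le_eigenSum (hst ⟨hm, hmn⟩) hv)

lemma sub_smul_mem_eigenSum_diff (hv : v ∈ eigenSum θ f s) :
    f v - θ n • v ∈ eigenSum θ f (s \ {n}) :=
  apply_sub_smul_mem_eigenSum
    (fun m _ v hv => by simp [Module.End.mem_eigenspace_iff.1 hv]) subset_rfl hv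

open Polynomial in
lemma eigenSum_coe_finset_eq_ker_aeval (hθ : Function.Injective θ) (f : Module.End K V)
    (s : Finset κ) :
    eigenSum θ f s = LinearMap.ker (aeval f (∏ n ∈ s, (X - C (θ n)))) := by
  classical
  induction s using Finset.induction_on with
  | empty => simp [eigenSum, Module.End.one_eq_id]
  | insert n s hn ih =>
    have hcop : IsCoprime (X - C (θ n)) (∏ m ∈ s, (X - C (θ m))) :=
      IsCoprime.prod_right fun m hm =>
        pairwise_coprime_X_sub_C hθ (ne_of_mem_of_not_mem hm hn).symm
    rw [Finset.prod_insert hn, ← sup_ker_aeval_eq_ker_aeval_mul_of_coprime f hcop, ← ih,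
      Finset.coe_insert, eigenSum, iSup_insert, ← eigenSum]
    simp [Module.End.eigenspace_def, Algebra.algebraMap_eq_smul_one]

/-- `f` is diagonalizable and its eigenvalues are the `θ n`, `n ∈ s`. -/
structure IsDiagonalizableWith (θ : κ → K) (s : Set κ) (f : Module.End K V) : Prop where
  eigenSum_eq_top : eigenSum θ f s = ⊤
  eigenspace_ne_bot : ∀ n ∈ s, f.eigenspace (θ n) ≠ ⊥

namespace IsDiagonalizableWith

lemma iSup_eigenspace_eq_top (h : IsDiagonalizableWith θ s f) : ⨆ n, f.eigenspace (θ n) = ⊤ :=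
  eq_top_mono (iSup₂_le fun n _ => le_iSup (fun n => f.eigenspace (θ n)) n) h.eigenSum_eq_top

lemma eigenSum_eq_bot (h : IsDiagonalizableWith θ s f) (hθ : Function.Injective θ)
    (hst : Disjoint s t) : eigenSum θ f t = ⊥ := by
  rw [← top_disjoint, ← h.eigenSum_eq_top]
  exact disjoint_eigenSum hθ hst

lemma eigenSum_ne_top (h : IsDiagonalizableWith θ s f) (hθ : Function.Injective θ)
    (hns : n ∈ s) (hnt : n ∉ t) : eigenSum θ f t ≠ ⊤ := by
  intro htop
  have hdisj := disjoint_eigenSum (f := f) hθ (Set.disjoint_singleton_left.2 hnt)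
  rw [htop, disjoint_top] at hdisj
  exact h.eigenspace_ne_bot n hns
    (eq_bot_mono (eigenspace_le_eigenSum (Set.mem_singleton n)) hdisj)

lemma eigenSum_ne_bot (h : IsDiagonalizableWith θ s f) (hns : n ∈ s) (hnt : n ∈ t) :
    eigenSum θ f t ≠ ⊥ :=
  fun hbot => h.eigenspace_ne_bot n hns (eq_bot_mono (eigenspace_le_eigenSum hnt) hbot)

end IsDiagonalizableWith

end EigenSum

section Tridiagonal

open Set

variable {K V : Type*} [Field K] [AddCommGroup V] [Module K V]
  {θ θ' : ℤ → K} {d : ℕ} {i j n : ℤ} {X Y : Module.End K V} {s t : Set ℤ} {v : V}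

/-- `Y` acts tridiagonally on the eigenspaces of `X`, ordered by the eigenvalues `θ n`. -/
def ActsTridiagonally (θ : ℤ → K) (X Y : Module.End K V) : Prop :=
  ∀ n, ∀ v ∈ X.eigenspace (θ n), Y v ∈ eigenSum θ X (Icc (n - 1) (n + 1))

lemma ActsTridiagonally.apply_mem_eigenSum (h : ActsTridiagonally θ X Y)
    (hst : ∀ n ∈ s, Icc (n - 1) (n + 1) ⊆ t) (hv : v ∈ eigenSum θ X s) :
    Y v ∈ eigenSum θ X t :=
  apply_mem_of_mem_eigenSum Y (fun n hn w hw => eigenSum_mono (hst n hn) (h n w hw)) hv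

/-- The intersection of the flag of `Y` up to `i` with the flag of `X` from `j` on. The subspaces
`splitSpace θ θ' X Y n n` form the split decomposition for the pair `X`, `Y`. -/
def splitSpace (θ θ' : ℤ → K) (X Y : Module.End K V) (i j : ℤ) : Submodule K V :=
  eigenSum θ' Y (Iic i) ⊓ eigenSum θ X (Ici j)

lemma apply_mem_splitSpace {Z : Module.End K V} (hY : ActsTridiagonally θ' Y Z)
    (hX : ActsTridiagonally θ X Z) (hv : v ∈ splitSpace θ θ' X Y i j) :
    Z v ∈ splitSpace θ θ' X Y (i + 1) (j - 1) :=
  ⟨hY.apply_mem_eigenSum (fun _ hn _ hm => hm.2.trans (add_le_add_left hn 1)) hv.1,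
    hX.apply_mem_eigenSum (fun _ hn _ hm => (sub_le_sub_right hn 1).trans hm.1) hv.2⟩

lemma left_sub_smul_mem_splitSpace (h : ActsTridiagonally θ' Y X)
    (hv : v ∈ splitSpace θ θ' X Y i j) :
    X v - θ j • v ∈ splitSpace θ θ' X Y (i + 1) (j + 1) := by
  refine ⟨Submodule.sub_mem _ ?_ (Submodule.smul_mem _ _ ?_), ?_⟩
  · exact h.apply_mem_eigenSum (fun n hn m hm => hm.2.trans (add_le_add_left hn 1)) hv.1
  · exact eigenSum_mono (Iic_subset_Iic.2 (lt_add_one i).le) hv.1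
  · exact eigenSum_mono
      (fun m hm => Int.add_one_le_of_lt (lt_of_le_of_ne hm.1 (Ne.symm hm.2)))
      (sub_smul_mem_eigenSum_diff hv.2)

lemma right_sub_smul_mem_splitSpace (h : ActsTridiagonally θ X Y)
    (hv : v ∈ splitSpace θ θ' X Y i j) :
    Y v - θ' i • v ∈ splitSpace θ θ' X Y (i - 1) (j - 1) := by
  refine ⟨?_, Submodule.sub_mem _ ?_ (Submodule.smul_mem _ _ ?_)⟩
  · exact eigenSum_mono (fun m hm => Int.le_sub_one_of_lt (lt_of_le_of_ne hm.1 hm.2))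
      (sub_smul_mem_eigenSum_diff hv.1)
  · exact h.apply_mem_eigenSum (fun n hn m hm => (sub_le_sub_right hn 1).trans hm.1) hv.2
  · exact eigenSum_mono (Ici_subset_Ici.2 (sub_one_lt j).le) hv.2

/-- A tridiagonal pair of diameter `d` with eigenvalue sequence `θ` and dual eigenvalue sequence
`θ'`. The sequences run over all of `ℤ`, but only their terms of index `0, …, d` are eigenvalues. -/
structure IsTridiagonalPair (θ θ' : ℤ → K) (d : ℕ) (X Y : Module.End K V) : Prop where
  injective_left : Function.Injective θ
  injective_right : Function.Injective θ'
  diag_left : IsDiagonalizableWith θ (Icc 0 (d : ℤ)) X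
  diag_right : IsDiagonalizableWith θ' (Icc 0 (d : ℤ)) Y
  tridiag_left : ActsTridiagonally θ X Y
  tridiag_right : ActsTridiagonally θ' Y X
  eq_bot_or_eq_top : ∀ W : Submodule K V,
    (∀ v ∈ W, X v ∈ W) → (∀ v ∈ W, Y v ∈ W) → W = ⊥ ∨ W = ⊤

namespace IsTridiagonalPair

lemma symm (h : IsTridiagonalPair θ θ' d X Y) : IsTridiagonalPair θ' θ d Y X :=
  ⟨h.injective_right, h.injective_left, h.diag_right, h.diag_left, h.tridiag_right,
    h.tridiag_left, fun W hY hX => h.eq_bot_or_eq_top W hX hY⟩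

lemma iSup_splitSpace_add_eq_bot_or_eq_top (h : IsTridiagonalPair θ θ' d X Y) (r : ℤ) :
    ⨆ i, splitSpace θ θ' X Y i (i + r) = ⊥ ∨ ⨆ i, splitSpace θ θ' X Y i (i + r) = ⊤ := by
  set S := ⨆ i, splitSpace θ θ' X Y i (i + r)
  have hle (i : ℤ) : splitSpace θ θ' X Y i (i + r) ≤ S :=
    le_iSup (fun i => splitSpace θ θ' X Y i (i + r)) i
  have hX : S ≤ S.comap X := iSup_le fun i v hv => by
    have hmem := left_sub_smul_mem_splitSpace h.tridiag_right hv
    rw [add_right_comm] at hmem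
    simpa using S.add_mem (hle _ hmem) (S.smul_mem (θ (i + r)) (hle i hv))
  have hY : S ≤ S.comap Y := iSup_le fun i v hv => by
    have hmem := right_sub_smul_mem_splitSpace h.tridiag_left hv
    rw [add_sub_right_comm] at hmem
    simpa using S.add_mem (hle _ hmem) (S.smul_mem (θ' i) (hle i hv))
  exact h.eq_bot_or_eq_top S (fun v hv => hX hv) (fun v hv => hY hv)

lemma iSup_splitSpace_eq_top (h : IsTridiagonalPair θ θ' d X Y) :
    ⨆ i, splitSpace θ θ' X Y i i = ⊤ := by
  have hzero : (0 : ℤ) ∈ Icc 0 (d : ℤ) := ⟨le_rfl, Int.natCast_nonneg d⟩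
  have htop : eigenSum θ X (Ici 0) = ⊤ :=
    eq_top_mono (eigenSum_mono Icc_subset_Ici_self) h.diag_left.eigenSum_eq_top
  have hne : splitSpace θ θ' X Y 0 0 ≠ ⊥ := by
    rw [splitSpace, htop, inf_top_eq]
    exact h.diag_right.eigenSum_ne_bot hzero self_mem_Iic
  have hdich := h.iSup_splitSpace_add_eq_bot_or_eq_top 0
  simp only [add_zero] at hdich
  exact hdich.resolve_left fun hbot =>
    hne (eq_bot_mono (le_iSup (fun i => splitSpace θ θ' X Y i i) 0) hbot)

lemma splitSpace_eq_bot_of_lt (h : IsTridiagonalPair θ θ' d X Y) (hij : i < j) :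
    splitSpace θ θ' X Y i j = ⊥ := by
  have hle := le_iSup (fun k => splitSpace θ θ' X Y k (k + (j - i))) i
  simp only [add_sub_cancel] at hle
  refine eq_bot_mono hle ((h.iSup_splitSpace_add_eq_bot_or_eq_top (j - i)).resolve_right ?_)
  intro htop
  -- Otherwise the flag of `X` from `1` on is everything, though it misses the eigenspace of `θ 0`.
  refine h.diag_left.eigenSum_ne_top h.injective_left (t := Ici 1)
    ⟨le_rfl, Int.natCast_nonneg d⟩ (by simp) (top_le_iff.1 ?_)
  rw [← htop]
  refine iSup_le fun k => ?_
  rcases lt_or_ge k 0 with hk | hk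
  · have hbot := h.diag_right.eigenSum_eq_bot h.injective_right (t := Iic k)
      (disjoint_left.2 fun m hm hmk => hk.not_ge (hm.1.trans hmk))
    simp [splitSpace, hbot]
  · exact inf_le_right.trans (eigenSum_mono (Ici_subset_Ici.2 (by lia)))

lemma oppositeFlags (h : IsTridiagonalPair θ θ' d X Y) :
    OppositeFlags (fun i => eigenSum θ' Y (Iic i)) fun j => eigenSum θ X (Ici j) where
  monotone _ _ hij := eigenSum_mono (Iic_subset_Iic.2 hij)
  antitone _ _ hij := eigenSum_mono (Ici_subset_Ici.2 hij)
  disjoint _ _ hij := disjoint_iff.2 (h.splitSpace_eq_bot_of_lt hij)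
  iSup_inf_eq_top := h.iSup_splitSpace_eq_top

lemma splitSpace_self_ne_bot_iff (h : IsTridiagonalPair θ θ' d X Y) :
    splitSpace θ θ' X Y n n ≠ ⊥ ↔ n ∈ Icc 0 (d : ℤ) := by
  constructor
  · contrapose!
    intro hn
    rw [mem_Icc, not_and_or, not_le, not_le] at hn
    rcases hn with hn | hn
    · have hbot := h.diag_right.eigenSum_eq_bot h.injective_right (t := Iic n)
        (disjoint_left.2 fun m hm hmn => hn.not_ge (hm.1.trans hmn))
      rw [splitSpace, hbot, bot_inf_eq]
    · have hbot := h.diag_left.eigenSum_eq_bot h.injective_left (t := Ici n)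
        (disjoint_left.2 fun m hm hmn => hn.not_ge (le_trans hmn hm.2))
      rw [splitSpace, hbot, inf_bot_eq]
  · intro hn hbot
    have hstep : eigenSum θ' Y (Iic n) = eigenSum θ' Y (Iic (n - 1)) := by
      have hsup := h.oppositeFlags.eq_inf_sup_pred n
      rwa [← splitSpace, hbot, bot_sup_eq] at hsup
    have hdisj : Disjoint (eigenSum θ' Y (Iic (n - 1))) (eigenSum θ' Y {n}) :=
      disjoint_eigenSum h.injective_right (by simp)
    rw [← hstep] at hdisj
    exact h.diag_right.eigenSum_ne_bot hn (mem_singleton n)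
      (hdisj.eq_bot_of_ge (eigenSum_mono (by simp)))

end IsTridiagonalPair

end Tridiagonal

section QRelations

variable {K A : Type*} [Field K] [Ring A] [Algebra K A] {q : K} {a b : A}

/-- The `q`-Weyl relation `(q a b - q⁻¹ b a) / (q - q⁻¹) = 1` between consecutive generators of
`□_q`, with the denominator cleared. -/
def QWeyl (q : K) (a b : A) : Prop :=
  q • (a * b) - q⁻¹ • (b * a) = (q - q⁻¹) • (1 : A)

/-- The cubic `q`-Serre relation for `a` and `b`, with `[3]_q` written out and with the negative
terms moved to the other side. -/
def QSerre (q : K) (a b : A) : Prop :=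
  a ^ 3 * b + ((q ^ 3 - q⁻¹ ^ 3) / (q - q⁻¹)) • (a * b * a ^ 2) =
    ((q ^ 3 - q⁻¹ ^ 3) / (q - q⁻¹)) • (a ^ 2 * b * a) + b * a ^ 3

lemma QWeyl.map {B : Type*} [Ring B] [Algebra K B] (h : QWeyl q a b) (f : A →ₐ[K] B) :
    QWeyl q (f a) (f b) := by
  simpa [QWeyl] using congrArg f h

lemma QSerre.map {B : Type*} [Ring B] [Algebra K B] (h : QSerre q a b) (f : A →ₐ[K] B) :
    QSerre q (f a) (f b) := by
  simpa [QSerre] using congrArg f h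

lemma qWeyl_inv_iff : QWeyl q⁻¹ a b ↔ QWeyl q b a := by
  rw [QWeyl, QWeyl, inv_inv, ← neg_inj, neg_sub, ← neg_smul, neg_sub]

lemma qSerre_inv_iff : QSerre q⁻¹ a b ↔ QSerre q a b := by
  rw [QSerre, QSerre, inv_inv, ← neg_sub (q ^ 3), ← neg_sub q, neg_div_neg_eq]

lemma pow_three_sub_inv_div (hq : q ≠ 0) (hq2 : q ^ 2 ≠ 1) :
    (q ^ 3 - q⁻¹ ^ 3) / (q - q⁻¹) = q ^ 2 + 1 + q⁻¹ ^ 2 := by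
  have hsub : q - q⁻¹ ≠ 0 := by
    intro h
    apply hq2
    rw [pow_two]
    exact (mul_eq_one_iff_eq_inv₀ hq).2 (sub_eq_zero.1 h)
  rw [div_eq_iff hsub]
  field_simp
  ring

/-- `θ` is an injective geometric progression of ratio `q⁻²`, like the sequences of eigenvalues of
modules of type 1. -/
structure IsQGeometric (q : K) (θ : ℤ → K) : Prop where
  apply_add_one : ∀ n, θ (n + 1) = q⁻¹ ^ 2 * θ n
  injective : Function.Injective θ

namespace IsQGeometric

variable {θ : ℤ → K}

lemma apply_ne_zero (hθ : IsQGeometric q θ) (n : ℤ) : θ n ≠ 0 := by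
  intro hn
  have hsucc : θ (n + 1) = θ n := by rw [hθ.apply_add_one, hn, mul_zero]
  exact (lt_add_one n).ne' (hθ.injective hsucc)

lemma ne_zero (hθ : IsQGeometric q θ) : q ≠ 0 := by
  rintro rfl
  exact hθ.apply_ne_zero 1 (by simpa using hθ.apply_add_one 0)

lemma sq_ne_one (hθ : IsQGeometric q θ) : q ^ 2 ≠ 1 := by
  intro hq
  have hone : θ (0 + 1) = θ 0 := by rw [hθ.apply_add_one, inv_pow, hq, inv_one, one_mul]
  exact one_ne_zero (hθ.injective hone)

lemma apply_sub_one (hθ : IsQGeometric q θ) (n : ℤ) : θ (n - 1) = q ^ 2 * θ n := by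
  have hsucc := hθ.apply_add_one (n - 1)
  rw [sub_add_cancel] at hsucc
  rw [hsucc, inv_pow, mul_inv_cancel_left₀ (pow_ne_zero 2 hθ.ne_zero)]

lemma inv (hθ : IsQGeometric q θ) : IsQGeometric q⁻¹ θ⁻¹ where
  apply_add_one n := by rw [Pi.inv_apply, Pi.inv_apply, hθ.apply_add_one, mul_inv, ← inv_pow]
  injective := inv_injective.comp hθ.injective

open Polynomial in
lemma prod_Icc_X_sub_C (hθ : IsQGeometric q θ) (n : ℤ) :
    ∏ m ∈ Finset.Icc (n - 1) (n + 1), (X - C (θ m)) =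
      (X - C (q ^ 2 * θ n)) * ((X - C (θ n)) * (X - C (q⁻¹ ^ 2 * θ n))) := by
  have hIcc : Finset.Icc (n - 1) (n + 1) = {n - 1, n, n + 1} := by
    ext m
    simp only [Finset.mem_Icc, Finset.mem_insert, Finset.mem_singleton]
    lia
  rw [hIcc, Finset.prod_insert (by simp; lia), Finset.prod_insert (by simp),
    Finset.prod_singleton, hθ.apply_sub_one, hθ.apply_add_one]

end IsQGeometric

end QRelations

section QTridiagonal

open Set

variable {K V : Type*} [Field K] [AddCommGroup V] [Module K V] {q c : K} {θ : ℤ → K} {d : ℕ}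
  {n : ℤ} {s t : Set ℤ} {X Y Z W : Module.End K V} {v : V}

open Polynomial in
/-- Evaluated at `v`, the Serre relation says that `Y v` is annihilated by the cubic in `X` with
roots `θ (n - 1)`, `θ n`, `θ (n + 1)`. -/
lemma IsQGeometric.apply_mem_eigenSum_Icc_iff (hθ : IsQGeometric q θ)
    (hv : v ∈ X.eigenspace (θ n)) :
    Y v ∈ eigenSum θ X (Icc (n - 1) (n + 1)) ↔
      (X ^ 3 * Y + ((q ^ 3 - q⁻¹ ^ 3) / (q - q⁻¹)) • (X * Y * X ^ 2)) v =
        (((q ^ 3 - q⁻¹ ^ 3) / (q - q⁻¹)) • (X ^ 2 * Y * X) + Y * X ^ 3) v := by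
  have hXv := Module.End.mem_eigenspace_iff.1 hv
  have hq := hθ.ne_zero
  rw [pow_three_sub_inv_div hq hθ.sq_ne_one, ← Finset.coe_Icc,
    eigenSum_coe_finset_eq_ker_aeval hθ.injective, hθ.prod_Icc_X_sub_C, LinearMap.mem_ker,
    ← sub_eq_zero (b := (_ + Y * X ^ 3 : Module.End K V) v)]
  refine Eq.congr_left ?_
  simp only [map_mul, map_sub, aeval_X, aeval_C, Algebra.algebraMap_eq_smul_one, pow_succ,
    pow_zero, one_mul, Module.End.mul_apply, LinearMap.add_apply, LinearMap.sub_apply,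
    LinearMap.smul_apply, Module.End.one_apply, hXv, map_smul, smul_smul]
  match_scalars <;> field_simp <;> ring

lemma QSerre.actsTridiagonally (h : QSerre q X Y) (hθ : IsQGeometric q θ) :
    ActsTridiagonally θ X Y :=
  fun _ _ hv => (hθ.apply_mem_eigenSum_Icc_iff hv).2 (LinearMap.congr_fun h _)

lemma ActsTridiagonally.qSerre (h : ActsTridiagonally θ X Y) (hθ : IsQGeometric q θ)
    (hX : ⨆ n, X.eigenspace (θ n) = ⊤) : QSerre q X Y :=
  linearMap_ext_of_iSup_eq_top hX fun n v hv => (hθ.apply_mem_eigenSum_Icc_iff hv).1 (h n v hv)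

lemma QWeyl.apply_sub_smul_mem_eigenspace (h : QWeyl q X Z) (hq : q ≠ 0) (hc : c ≠ 0)
    (hv : v ∈ X.eigenspace c) : Z v - c⁻¹ • v ∈ X.eigenspace (q⁻¹ ^ 2 * c) := by
  have hXv := Module.End.mem_eigenspace_iff.1 hv
  have hrel : q • X (Z v) - q⁻¹ • c • Z v = (q - q⁻¹) • v := by
    simpa [hXv] using LinearMap.congr_fun h v
  have hXZ : X (Z v) = q⁻¹ • ((q - q⁻¹) • v + q⁻¹ • c • Z v) := by
    rw [← hrel, sub_add_cancel, inv_smul_smul₀ hq]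
  rw [Module.End.mem_eigenspace_iff, map_sub, map_smul, hXv, hXZ]
  match_scalars <;> field_simp
  ring

lemma QWeyl.apply_sub_smul_mem_eigenspace_add_one (h : QWeyl q X Z) (hθ : IsQGeometric q θ)
    (hv : v ∈ X.eigenspace (θ n)) : Z v - (θ n)⁻¹ • v ∈ X.eigenspace (θ (n + 1)) := by
  rw [hθ.apply_add_one]
  exact h.apply_sub_smul_mem_eigenspace hθ.ne_zero (hθ.apply_ne_zero n) hv

lemma QWeyl.apply_sub_smul_mem_eigenspace_sub_one (h : QWeyl q Z Y) (hθ : IsQGeometric q θ)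
    (hv : v ∈ Y.eigenspace (θ n)) : Z v - (θ n)⁻¹ • v ∈ Y.eigenspace (θ (n - 1)) := by
  have hmem := (qWeyl_inv_iff.2 h).apply_sub_smul_mem_eigenspace (inv_ne_zero hθ.ne_zero)
    (hθ.apply_ne_zero n) hv
  rwa [inv_inv, ← hθ.apply_sub_one] at hmem

lemma qWeyl_apply_of_apply_eq (hq : q ≠ 0) (hc : c ≠ 0) (hv : Z v = c⁻¹ • v)
    (hw : Z (X v - c • v) = (q⁻¹ ^ 2 * c)⁻¹ • (X v - c • v)) :
    (q • (X * Z) - q⁻¹ • (Z * X)) v = (q - q⁻¹) • v := by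
  have hZX : Z (X v) = (q⁻¹ ^ 2 * c)⁻¹ • (X v - c • v) + v := by
    rw [← hw, map_sub, map_smul, hv, smul_inv_smul₀ hc, sub_add_cancel]
  simp only [LinearMap.sub_apply, LinearMap.smul_apply, Module.End.mul_apply, hv, hZX, map_smul]
  match_scalars <;> field_simp <;> ring

lemma QWeyl.apply_sub_smul_mem_eigenSum_left (h : QWeyl q X Z) (hθ : IsQGeometric q θ)
    (hadd : ∀ m ∈ s, m + 1 ∈ t) (hst : s \ {n} ⊆ t) (hv : v ∈ eigenSum θ X s) :
    Z v - (θ n)⁻¹ • v ∈ eigenSum θ X t :=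
  apply_sub_smul_mem_eigenSum (c := θ⁻¹) (fun m hm _ hw =>
    eigenspace_le_eigenSum (hadd m hm) (h.apply_sub_smul_mem_eigenspace_add_one hθ hw)) hst hv

lemma QWeyl.apply_sub_smul_mem_eigenSum_right (h : QWeyl q Z Y) (hθ : IsQGeometric q θ)
    (hsub : ∀ m ∈ s, m - 1 ∈ t) (hst : s \ {n} ⊆ t) (hv : v ∈ eigenSum θ Y s) :
    Z v - (θ n)⁻¹ • v ∈ eigenSum θ Y t :=
  apply_sub_smul_mem_eigenSum (c := θ⁻¹) (fun m hm _ hw =>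
    eigenspace_le_eigenSum (hsub m hm) (h.apply_sub_smul_mem_eigenspace_sub_one hθ hw)) hst hv

lemma QWeyl.actsTridiagonally_left (h : QWeyl q X Z) (hθ : IsQGeometric q θ) :
    ActsTridiagonally θ X Z := fun n v hv => by
  rw [← sub_add_cancel (Z v) ((θ n)⁻¹ • v)]
  exact Submodule.add_mem _
    (eigenspace_le_eigenSum (by simp; lia) (h.apply_sub_smul_mem_eigenspace_add_one hθ hv))
    (Submodule.smul_mem _ _ (eigenspace_le_eigenSum (by simp) hv))

lemma QWeyl.actsTridiagonally_right (h : QWeyl q Z Y) (hθ : IsQGeometric q θ) :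
    ActsTridiagonally θ Y Z := fun n v hv => by
  rw [← sub_add_cancel (Z v) ((θ n)⁻¹ • v)]
  exact Submodule.add_mem _
    (eigenspace_le_eigenSum (by simp; lia) (h.apply_sub_smul_mem_eigenspace_sub_one hθ hv))
    (Submodule.smul_mem _ _ (eigenspace_le_eigenSum (by simp) hv))

lemma apply_sub_smul_mem_splitSpace (hXZ : QWeyl q X Z) (hZY : QWeyl q Z Y)
    (hθ : IsQGeometric q θ) (hv : v ∈ splitSpace θ θ X Y n n) :
    Z v - (θ n)⁻¹ • v ∈ splitSpace θ θ X Y (n - 1) (n + 1) := by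
  have hY : Z v - (θ n)⁻¹ • v ∈ eigenSum θ Y (Iic (n - 1)) :=
    hZY.apply_sub_smul_mem_eigenSum_right hθ (s := Iic n)
      (fun _ hm => mem_Iic.2 (sub_le_sub_right hm 1))
      (fun _ hm => Int.le_sub_one_of_lt (lt_of_le_of_ne hm.1 hm.2)) hv.1
  have hX : Z v - (θ n)⁻¹ • v ∈ eigenSum θ X (Ici (n + 1)) :=
    hXZ.apply_sub_smul_mem_eigenSum_left hθ (s := Ici n)
      (fun _ hm => mem_Ici.2 (add_le_add_left hm 1))
      (fun _ hm => Int.add_one_le_of_lt (lt_of_le_of_ne hm.1 (Ne.symm hm.2))) hv.2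
  exact ⟨hY, hX⟩

namespace IsTridiagonalPair

lemma qWeyl_and_qWeyl_iff (h : IsTridiagonalPair θ θ d X Y) (hθ : IsQGeometric q θ) :
    QWeyl q X Z ∧ QWeyl q Z Y ↔ ∀ n, ∀ v ∈ splitSpace θ θ X Y n n, Z v = (θ n)⁻¹ • v := by
  constructor
  · rintro ⟨hXZ, hZY⟩ n v hv
    have hmem := apply_sub_smul_mem_splitSpace hXZ hZY hθ hv
    rw [h.splitSpace_eq_bot_of_lt (by lia), Submodule.mem_bot] at hmem
    exact sub_eq_zero.1 hmem
  · intro hZ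
    refine ⟨?_, qWeyl_inv_iff.1 ?_⟩ <;>
      refine linearMap_ext_of_iSup_eq_top h.iSup_splitSpace_eq_top fun n v hv => ?_
    · have hw := hZ _ _ (left_sub_smul_mem_splitSpace h.tridiag_right hv)
      rw [hθ.apply_add_one] at hw
      exact qWeyl_apply_of_apply_eq hθ.ne_zero (hθ.apply_ne_zero n) (hZ n v hv) hw
    · have hw := hZ _ _ (right_sub_smul_mem_splitSpace h.tridiag_left hv)
      rw [hθ.apply_sub_one, ← inv_inv q] at hw
      exact qWeyl_apply_of_apply_eq (inv_ne_zero hθ.ne_zero) (hθ.apply_ne_zero n) (hZ n v hv) hw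

lemma existsUnique_qWeyl (h : IsTridiagonalPair θ θ d X Y) (hθ : IsQGeometric q θ) :
    ∃! Z : Module.End K V, QWeyl q X Z ∧ QWeyl q Z Y := by
  simp only [h.qWeyl_and_qWeyl_iff hθ]
  obtain ⟨Z, hZ⟩ := exists_linearMap_forall_apply_eq h.oppositeFlags.iSupIndep_inf
    h.iSup_splitSpace_eq_top fun n => (θ n)⁻¹ • (splitSpace θ θ X Y n n).subtype
  exact ⟨Z, fun n v hv => hZ n ⟨v, hv⟩, fun Z' hZ' =>
    linearMap_ext_of_iSup_eq_top h.iSup_splitSpace_eq_top fun n v hv =>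
      (hZ' n v hv).trans (hZ n ⟨v, hv⟩).symm⟩

lemma splitSpace_eq_eigenspace (h : IsTridiagonalPair θ θ d X Y) (hθ : IsQGeometric q θ)
    (hXZ : QWeyl q X Z) (hZY : QWeyl q Z Y) (n : ℤ) :
    splitSpace θ θ X Y n n = Z.eigenspace (θ⁻¹ n) := by
  have hle : (fun n => splitSpace θ θ X Y n n) ≤ fun n => Z.eigenspace (θ⁻¹ n) := fun n v hv =>
    Module.End.mem_eigenspace_iff.2 ((h.qWeyl_and_qWeyl_iff hθ).1 ⟨hXZ, hZY⟩ n v hv)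
  have hind : iSupIndep fun n => Z.eigenspace (θ⁻¹ n) :=
    iSupIndep_eigenspace_comp hθ.inv.injective
  exact congrFun ((hind.le_iff_eq_of_iSup_eq_top h.iSup_splitSpace_eq_top).1 hle) n

lemma isDiagonalizableWith_of_qWeyl (h : IsTridiagonalPair θ θ d X Y) (hθ : IsQGeometric q θ)
    (hXZ : QWeyl q X Z) (hZY : QWeyl q Z Y) : IsDiagonalizableWith θ⁻¹ (Icc 0 (d : ℤ)) Z where
  eigenSum_eq_top := by
    rw [eq_top_iff, ← h.iSup_splitSpace_eq_top]
    refine iSup_le fun n => ?_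
    by_cases hn : n ∈ Icc 0 (d : ℤ)
    · rw [h.splitSpace_eq_eigenspace hθ hXZ hZY]
      exact eigenspace_le_eigenSum hn
    · rw [← h.splitSpace_self_ne_bot_iff, not_not] at hn
      exact hn.trans_le bot_le
  eigenspace_ne_bot n hn := by
    rw [← h.splitSpace_eq_eigenspace hθ hXZ hZY]
    exact h.splitSpace_self_ne_bot_iff.2 hn

/-- `Z` moves the two flags defining the split decomposition of the pair `Y`, `X`, whose components
are the eigenspaces of `W`, by at most one step each; hence it acts tridiagonally on them. -/
lemma qSerre_of_qWeyl (h : IsTridiagonalPair θ θ d X Y) (hθ : IsQGeometric q θ)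
    (hXZ : QWeyl q X Z) (hZY : QWeyl q Z Y) (hYW : QWeyl q Y W) (hWX : QWeyl q W X) :
    QSerre q W Z := by
  have hW := h.symm.splitSpace_eq_eigenspace hθ hYW hWX
  have htri : ActsTridiagonally θ⁻¹ W Z := fun n v hv => by
    rw [← hW] at hv
    have hle : splitSpace θ θ Y X (n + 1) (n - 1) ≤
        ⨆ m ∈ Icc (n - 1) (n + 1), splitSpace θ θ Y X m m :=
      h.symm.oppositeFlags.inf_le_iSup_Icc (n + 1) (n - 1)
    simp only [hW] at hle
    exact hle (apply_mem_splitSpace (hXZ.actsTridiagonally_left hθ)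
      (hZY.actsTridiagonally_right hθ) hv)
  refine qSerre_inv_iff.1 (htri.qSerre hθ.inv ?_)
  simp only [← hW, h.symm.iSup_splitSpace_eq_top]

end IsTridiagonalPair

end QTridiagonal

section BoxQ

open Set

variable {F} {q : F} {d : ℕ} {θ : ℤ → F} {V : Type} [AddCommGroup V] [Module F V]

lemma isDiagonalizableWith_iff {κ : Type*} {θ : κ → F} {s : Set κ} {f : Module.End F V} :
    IsDiagonalizableWith θ s f ↔ SemisimpleOn F f ∧ EigSet F f = θ '' s := by
  constructor
  · intro h
    refine ⟨?_, Subset.antisymm (fun μ hμ => ?_) ?_⟩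
    · rw [SemisimpleOn, eq_top_iff, ← h.eigenSum_eq_top]
      exact iSup₂_le fun n _ => le_iSup f.eigenspace (θ n)
    · by_contra hμs
      have htop : ⨆ (ν) (_ : ν ≠ μ), f.eigenspace ν = ⊤ := by
        rw [eq_top_iff, ← h.eigenSum_eq_top]
        exact iSup₂_le fun n hn => le_iSup₂_of_le (θ n) (fun hnμ => hμs ⟨n, hn, hnμ⟩) le_rfl
      exact hμ (disjoint_top.1 (htop ▸ f.eigenspaces_iSupIndep μ))
    · rintro _ ⟨n, hn, rfl⟩
      exact h.eigenspace_ne_bot n hn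
  · rintro ⟨htop, hset⟩
    refine ⟨eq_top_iff.2 (htop.ge.trans (iSup_le fun μ => ?_)), fun n hn => ?_⟩
    · by_cases hμ : f.eigenspace μ = ⊥
      · exact hμ.trans_le bot_le
      · obtain ⟨n, hn, rfl⟩ := hset.subset hμ
        exact eigenspace_le_eigenSum hn
    · exact hset.superset (mem_image_of_mem θ hn)

/-- The eigenvalue `q ^ (d - 2 n)` of a module of type 1 and diameter `d`, for every integer `n`;
the actual eigenvalues are those with `0 ≤ n ≤ d`. -/
def type1Eigenvalue (q : F) (d : ℕ) (n : ℤ) : F := q ^ ((d : ℤ) - 2 * n)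

lemma type1Eigenvalue_image_Icc (q : F) (d : ℕ) :
    type1Eigenvalue q d '' Icc 0 (d : ℤ) =
      {θ : F | ∃ n : ℕ, n ≤ d ∧ θ = q ^ ((d : ℤ) - 2 * (n : ℤ))} := by
  ext μ
  constructor
  · rintro ⟨n, ⟨hn, hnd⟩, rfl⟩
    lift n to ℕ using hn
    exact ⟨n, Int.ofNat_le.1 hnd, rfl⟩
  · rintro ⟨n, hn, rfl⟩
    exact ⟨n, ⟨Int.natCast_nonneg n, Int.ofNat_le.2 hn⟩, rfl⟩

lemma inv_type1Eigenvalue (q : F) (d : ℕ) :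
    (type1Eigenvalue q d)⁻¹ = type1Eigenvalue q d ∘ fun n => d - n := by
  funext n
  rw [Pi.inv_apply, Function.comp_apply, type1Eigenvalue, type1Eigenvalue, ← zpow_neg]
  congr 1
  ring

lemma isQGeometric_type1Eigenvalue (hq0 : q ≠ 0) (hq1 : ∀ n : ℕ, 0 < n → q ^ n ≠ 1) (d : ℕ) :
    IsQGeometric q (type1Eigenvalue q d) where
  apply_add_one n := by
    rw [type1Eigenvalue, type1Eigenvalue, ← zpow_natCast, inv_zpow', ← zpow_add₀ hq0]
    congr 1
    push_cast
    ring
  injective := by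
    have hfin : ¬ IsOfFinOrder (Units.mk0 q hq0) := by
      rw [isOfFinOrder_iff_pow_eq_one]
      rintro ⟨n, hn, hqn⟩
      exact hq1 n hn (by simpa using congrArg Units.val hqn)
    intro m n hmn
    have hexp := injective_zpow_iff_not_isOfFinOrder.2 hfin
      (Units.ext (by simpa [type1Eigenvalue] using hmn) :
        Units.mk0 q hq0 ^ ((d : ℤ) - 2 * m) = Units.mk0 q hq0 ^ ((d : ℤ) - 2 * n))
    lia

lemma isDiagonalizableWith_type1Eigenvalue_iff {f : Module.End F V} :
    IsDiagonalizableWith (type1Eigenvalue q d) (Icc 0 (d : ℤ)) f ↔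
      SemisimpleOn F f ∧
        EigSet F f = {θ : F | ∃ n : ℕ, n ≤ d ∧ θ = q ^ ((d : ℤ) - 2 * (n : ℤ))} := by
  rw [isDiagonalizableWith_iff, type1Eigenvalue_image_Icc]

lemma isDiagonalizableWith_inv_type1Eigenvalue_iff {f : Module.End F V} :
    IsDiagonalizableWith (type1Eigenvalue q d)⁻¹ (Icc 0 (d : ℤ)) f ↔
      IsDiagonalizableWith (type1Eigenvalue q d) (Icc 0 (d : ℤ)) f := by
  rw [isDiagonalizableWith_iff, isDiagonalizableWith_iff, inv_type1Eigenvalue, image_comp,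
    image_const_sub_Icc, sub_self, sub_zero]

lemma apply_mem_of_forall_generator {κ : Type*} {r : FreeAlgebra F κ → FreeAlgebra F κ → Prop}
    (π : RingQuot r →ₐ[F] Module.End F V) {S : Submodule F V}
    (hS : ∀ i, ∀ v ∈ S, π (RingQuot.mkAlgHom F r (ι F i)) v ∈ S) (a : RingQuot r) :
    ∀ v ∈ S, π a v ∈ S := by
  obtain ⟨a, rfl⟩ := RingQuot.mkAlgHom_surjective F r a
  induction a using FreeAlgebra.induction with
  | grade0 c =>
    intro v hv
    simpa [Module.algebraMap_end_apply] using S.smul_mem c hv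
  | grade1 i => exact hS i
  | mul a b ha hb =>
    intro v hv
    simpa using ha _ (hb v hv)
  | add a b ha hb =>
    intro v hv
    simpa using S.add_mem (ha v hv) (hb v hv)

lemma qSerre_ux_uy : QSerre q (ux F q) (uy F q) := by
  simpa [QSerre, ux, uy] using RingQuot.mkAlgHom_rel F (UqpRel.relx (q := q))

lemma qSerre_uy_ux : QSerre q (uy F q) (ux F q) := by
  simpa [QSerre, ux, uy] using RingQuot.mkAlgHom_rel F (UqpRel.rely (q := q))

lemma qWeyl_bx (i : ZMod 4) : QWeyl q (bx F q i) (bx F q (i + 1)) := by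
  simpa [QWeyl, bx] using RingQuot.mkAlgHom_rel F (BoxRel.rel1 (q := q) i)

lemma exists_boxQ_algHom {A : Type*} [Ring A] [Algebra F A] (x : ZMod 4 → A)
    (hw : ∀ i, QWeyl q (x i) (x (i + 1))) (hs : ∀ i, QSerre q (x i) (x (i + 2))) :
    ∃ π : BoxQ F q →ₐ[F] A, ∀ i, π (bx F q i) = x i := by
  have hrel : ∀ ⦃a b : FreeAlgebra F (ZMod 4)⦄, BoxRel F q a b → lift F x a = lift F x b := by
    rintro _ _ (i | i)
    · simpa [QWeyl] using hw i
    · simpa [QSerre] using hs i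
  refine ⟨RingQuot.liftAlgHom F ⟨lift F x, hrel⟩, fun i => ?_⟩
  rw [bx, RingQuot.liftAlgHom_mkAlgHom_apply, lift_ι_apply]

lemma boxQ_algHom_ext {A : Type*} [Ring A] [Algebra F A] {π π' : BoxQ F q →ₐ[F] A}
    (h : ∀ i, π (bx F q i) = π' (bx F q i)) : π = π' :=
  RingQuot.ringQuot_ext' F _ _ (FreeAlgebra.hom_ext (funext h))

lemma isTridiagonalPair_ux_uy {Φ : Uqp F q →ₐ[F] Module.End F V} (hθ : IsQGeometric q θ)
    (hΦ : IsIrrep F Φ) (hx : IsDiagonalizableWith θ (Icc 0 (d : ℤ)) (Φ (ux F q)))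
    (hy : IsDiagonalizableWith θ (Icc 0 (d : ℤ)) (Φ (uy F q))) :
    IsTridiagonalPair θ θ d (Φ (ux F q)) (Φ (uy F q)) where
  injective_left := hθ.injective
  injective_right := hθ.injective
  diag_left := hx
  diag_right := hy
  tridiag_left := (qSerre_ux_uy.map Φ).actsTridiagonally hθ
  tridiag_right := (qSerre_uy_ux.map Φ).actsTridiagonally hθ
  eq_bot_or_eq_top S hSx hSy :=
    hΦ.2 S (apply_mem_of_forall_generator Φ (Bool.forall_bool.2 ⟨hSy, hSx⟩))

namespace IsTridiagonalPair

lemma existsUnique_boxQ_algHom {X Y : Module.End F V} (h : IsTridiagonalPair θ θ d X Y)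
    (hθ : IsQGeometric q θ) :
    ∃! π : BoxQ F q →ₐ[F] Module.End F V, π (bx F q 0) = X ∧ π (bx F q 2) = Y := by
  obtain ⟨Z, ⟨hXZ, hZY⟩, hZ⟩ := h.existsUnique_qWeyl hθ
  obtain ⟨W, ⟨hYW, hWX⟩, hW⟩ := h.symm.existsUnique_qWeyl hθ
  have hXY := h.tridiag_left.qSerre hθ h.diag_left.iSup_eigenspace_eq_top
  have hYX := h.tridiag_right.qSerre hθ h.diag_right.iSup_eigenspace_eq_top
  have hZW := h.symm.qSerre_of_qWeyl hθ hYW hWX hXZ hZY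
  have hWZ := h.qSerre_of_qWeyl hθ hXZ hZY hYW hWX
  obtain ⟨π, hπ⟩ := exists_boxQ_algHom (q := q) (![X, Z, Y, W] : Fin 4 → Module.End F V)
    (by intro i; fin_cases i <;> assumption) (by intro i; fin_cases i <;> assumption)
  refine ⟨π, ⟨hπ 0, hπ 2⟩, fun π' ⟨h0, h2⟩ => boxQ_algHom_ext fun i => ?_⟩
  rw [hπ]
  have hw (i : ZMod 4) := (qWeyl_bx (q := q) i).map π'
  fin_cases i
  · exact h0
  · exact hZ _ ⟨h0 ▸ hw 0, h2 ▸ hw 1⟩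
  · exact h2
  · exact hW _ ⟨h2 ▸ hw 2, h0 ▸ hw 3⟩

variable {π : BoxQ F q →ₐ[F] Module.End F V}

lemma isIrrep [Nontrivial V] (h : IsTridiagonalPair θ θ d (π (bx F q 0)) (π (bx F q 2))) :
    IsIrrep F π :=
  ⟨‹_›, fun S hS => h.eq_bot_or_eq_top S (hS _) (hS _)⟩

lemma type1Diam (hθ : IsQGeometric q (type1Eigenvalue q d))
    (h : IsTridiagonalPair (type1Eigenvalue q d) (type1Eigenvalue q d) d
      (π (bx F q 0)) (π (bx F q 2))) : Type1Diam F q π d := by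
  intro i
  have hw (i : ZMod 4) := (qWeyl_bx (q := q) i).map π
  rw [← isDiagonalizableWith_type1Eigenvalue_iff]
  fin_cases i
  · exact h.diag_left
  · exact isDiagonalizableWith_inv_type1Eigenvalue_iff.1
      (h.isDiagonalizableWith_of_qWeyl hθ (hw 0) (hw 1))
  · exact h.diag_right
  · exact isDiagonalizableWith_inv_type1Eigenvalue_iff.1
      (h.symm.isDiagonalizableWith_of_qWeyl hθ (hw 2) (hw 3))

end IsTridiagonalPair

end BoxQ

theorem stmt11_general (q : F) (hq0 : q ≠ 0) (hq1 : ∀ n : ℕ, 0 < n → q ^ n ≠ 1)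
    (V : Type) [AddCommGroup V] [Module F V]
    (Φ : Uqp F q →ₐ[F] Module.End F V) (hirr : IsIrrep F Φ) (d : ℕ)
    (hssx : SemisimpleOn F (Φ (ux F q))) (hssy : SemisimpleOn F (Φ (uy F q)))
    (hex : EigSet F (Φ (ux F q)) =
      {θ : F | ∃ n : ℕ, n ≤ d ∧ θ = q ^ ((d : ℤ) - 2 * (n : ℤ))})
    (hey : EigSet F (Φ (uy F q)) =
      {θ : F | ∃ n : ℕ, n ≤ d ∧ θ = q ^ ((d : ℤ) - 2 * (n : ℤ))}) :
    (∃! π : BoxQ F q →ₐ[F] Module.End F V,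
        π (bx F q 0) = Φ (ux F q) ∧ π (bx F q 2) = Φ (uy F q)) ∧
    ∀ π : BoxQ F q →ₐ[F] Module.End F V,
      π (bx F q 0) = Φ (ux F q) → π (bx F q 2) = Φ (uy F q) →
      IsIrrep F π ∧ Type1Diam F q π d := by
  have hθ := isQGeometric_type1Eigenvalue hq0 hq1 d
  have hpair := isTridiagonalPair_ux_uy hθ hirr
    (isDiagonalizableWith_type1Eigenvalue_iff.2 ⟨hssx, hex⟩)
    (isDiagonalizableWith_type1Eigenvalue_iff.2 ⟨hssy, hey⟩)
  refine ⟨hpair.existsUnique_boxQ_algHom hθ, fun π h0 h2 => ?_⟩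
  rw [← h0, ← h2] at hpair
  have := hirr.1
  exact ⟨hpair.isIrrep, hpair.type1Diam hθ⟩

/-- A NonNil finite-dimensional irreducible `U_q^+`-module of type `(1,1)` admits a
unique `□_q`-module structure in which `x₀` acts as `x` and `x₂` acts as `y`;
this structure is irreducible of type 1. -/
theorem stmt11 [IsAlgClosed F] [CharZero F] (q : F) (hq0 : q ≠ 0)
    (hq1 : ∀ n : ℕ, 0 < n → q ^ n ≠ 1)
    (V : Type) [AddCommGroup V] [Module F V] [FiniteDimensional F V]
    (Φ : Uqp F q →ₐ[F] Module.End F V) (hirr : IsIrrep F Φ)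
    (hnnx : ¬ IsNilpotent (Φ (ux F q))) (hnny : ¬ IsNilpotent (Φ (uy F q)))
    (d : ℕ)
    (hssx : SemisimpleOn F (Φ (ux F q))) (hssy : SemisimpleOn F (Φ (uy F q)))
    (hex : EigSet F (Φ (ux F q)) =
      {θ : F | ∃ n : ℕ, n ≤ d ∧ θ = q ^ ((d : ℤ) - 2 * (n : ℤ))})
    (hey : EigSet F (Φ (uy F q)) =
      {θ : F | ∃ n : ℕ, n ≤ d ∧ θ = q ^ ((d : ℤ) - 2 * (n : ℤ))}) :
    (∃! π : BoxQ F q →ₐ[F] Module.End F V,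
        π (bx F q 0) = Φ (ux F q) ∧ π (bx F q 2) = Φ (uy F q)) ∧
    ∀ π : BoxQ F q →ₐ[F] Module.End F V,
      π (bx F q 0) = Φ (ux F q) → π (bx F q 2) = Φ (uy F q) →
      IsIrrep F π ∧ ∃ d' : ℕ, Type1Diam F q π d' :=
  have ⟨hπ, hirr_type⟩ :=
    stmt11_general F q hq0 hq1 V Φ hirr d hssx hssy hex hey
  ⟨hπ, fun π h0 h2 => (hirr_type π h0 h2).imp_right fun h => ⟨d, h⟩⟩
end
end

section
/- The pullback along κ (i.e., letting the standard generators x, y of U_q^+ act as x_0, x_2 respectively) induces a bijection between the set of isomorphism classes of finite-dimensional irreducible □_q-modules of type 1 and the set of isomorphism classes of NonNil finite-dimensional irreducible U_q^+-modules of type (1,1). -/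
/-!
Write `V_i(X)` for the eigenspace of `X` with eigenvalue `q ^ (d - 2 i)`. If `Y` is diagonalizable
with eigenvalues `q ^ (2 i - d)`, the relation `q X Y - q⁻¹ Y X = q - q⁻¹` says that `X` acts on the
`i`-th eigenspace of `Y` as `q ^ (d - 2 i)` modulo the next one. Hence, if `Y` is related in this
way to `X` on its left and to `Z` on its right, its `i`-th eigenspace is
`(V_0(Z) + ⋯ + V_i(Z)) ∩ (V_i(X) + ⋯ + V_d(X))`. In a `□_q`-module of type 1, therefore, `x_0` and
`x_2` determine `x_1` and `x_3`.

Conversely, let `X` and `Z` be the generators of `U_q^+` acting on a module of type `(1, 1)`. By the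
`q`-Serre relations, `X - q ^ (d - 2 i)` raises and `Z - q ^ (d - 2 i)` lowers the index in this
family of intersections; irreducibility forces the family to be a direct sum decomposition of the
module. Let `Y` act on its `i`-th summand as `q ^ (2 i - d)`. This gives `x_1`, and exchanging `X`
with `Z` gives `x_3`.

Finally, let `W` be a minimal nonzero subspace of an irreducible `□_q`-module of type 1 that is
invariant under `x_0` and `x_2`. Comparing flags, the least indices of eigenvectors in `W` for `x_0`
and for `x_2` coincide, so `W` contains eigenvectors of `x_1` and of `x_3`. The sum of the
intersections of `W` with the eigenspaces of `x_1` is again invariant under `x_0` and `x_2`, hence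
equal to `W`; the same holds for `x_3`, so `W` is the whole module.
-/

noncomputable section

open FreeAlgebra

variable (F : Type) [Field F]

/-- The `□_q`-module given by `π` is irreducible of type 1. -/
def Box1 (q : F) {V : Type} [AddCommGroup V] [Module F V]
    (π : BoxQ F q →ₐ[F] Module.End F V) : Prop :=
  IsIrrep F π ∧ ∃ d : ℕ, Type1Diam F q π d

/-- The `U_q^+`-module given by `Φ` is NonNil irreducible of type `(1,1)`. -/
def Uqp11 (q : F) {V : Type} [AddCommGroup V] [Module F V]
    (Φ : Uqp F q →ₐ[F] Module.End F V) : Prop :=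
  IsIrrep F Φ ∧ ¬ IsNilpotent (Φ (ux F q)) ∧ ¬ IsNilpotent (Φ (uy F q)) ∧
    ∃ d : ℕ, SemisimpleOn F (Φ (ux F q)) ∧ SemisimpleOn F (Φ (uy F q)) ∧
      EigSet F (Φ (ux F q)) =
        {θ : F | ∃ n : ℕ, n ≤ d ∧ θ = q ^ ((d : ℤ) - 2 * (n : ℤ))} ∧
      EigSet F (Φ (uy F q)) =
        {θ : F | ∃ n : ℕ, n ≤ d ∧ θ = q ^ ((d : ℤ) - 2 * (n : ℤ))}

open Module.End (eigenspace)

section PartialSums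

variable {ι α : Type*} [CompleteLattice α]

/-- The supremum of the members of the family `G` whose index lies in `S`. For a family of
subspaces indexed by `ℤ`, the sets `S = Set.Ici i` and `S = Set.Iic i` give the terms of the
descending and the ascending flag of the family. -/
abbrev partialSum (G : ι → α) (S : Set ι) : α := ⨆ i ∈ S, G i

lemma partialSum_mono (G : ι → α) {S T : Set ι} (h : S ⊆ T) : partialSum G S ≤ partialSum G T :=
  biSup_mono h

lemma monotone_partialSum_Iic [Preorder ι] (G : ι → α) :
    Monotone fun i => partialSum G (Set.Iic i) := fun _ _ hij =>
  partialSum_mono G (Set.Iic_subset_Iic.2 hij)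

lemma antitone_partialSum_Ici [Preorder ι] (G : ι → α) :
    Antitone fun i => partialSum G (Set.Ici i) := fun _ _ hij =>
  partialSum_mono G (Set.Ici_subset_Ici.2 hij)

lemma partialSum_eq_iSup {G : ι → α} {S : Set ι} (h : ∀ i ∉ S, G i = ⊥) :
    partialSum G S = ⨆ i, G i := by
  rw [iSup_split G (· ∈ S), iSup₂_eq_bot.2 h, sup_bot_eq]

lemma partialSum_inf_partialSum [IsModularLattice α] [IsCompactlyGenerated α] {G : ι → α}
    (hG : iSupIndep G) (S T : Set ι) :
    partialSum G S ⊓ partialSum G T = partialSum G (S ∩ T) := by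
  have hdisj : Disjoint (partialSum G (S \ T)) (partialSum G T) :=
    hG.disjoint_biSup_biSup Set.disjoint_sdiff_left
  calc partialSum G S ⊓ partialSum G T
      = (partialSum G (S ∩ T) ⊔ partialSum G (S \ T)) ⊓ partialSum G T := by
        rw [← iSup_union, Set.inter_union_sdiff]
    _ = partialSum G (S ∩ T) := by
        have hle : partialSum G (S ∩ T) ≤ partialSum G T := biSup_mono fun _ => And.right
        rw [sup_inf_assoc_of_le _ hle, hdisj.eq_bot, sup_bot_eq]

lemma partialSum_comp_const_sub_Ici (G : ℤ → α) (d i : ℤ) :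
    partialSum (fun j => G (d - j)) (Set.Ici i) = partialSum G (Set.Iic (d - i)) := by
  rw [← Set.image_const_sub_Ici, partialSum, partialSum, iSup_image]

end PartialSums

section OppositeFlags

variable {α : Type*} [CompleteLattice α] [IsModularLattice α] {A B : ℤ → α}

lemma iSupIndep_inf_of_disjoint_flags (hA : Monotone A) (hB : Antitone B)
    (hAB : ∀ i, Disjoint (A i) (B (i + 1))) : iSupIndep fun i => A i ⊓ B i := by
  intro i
  have hothers : ⨆ j, ⨆ (_ : j ≠ i), A j ⊓ B j ≤ A (i - 1) ⊔ B (i + 1) := by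
    refine iSup₂_le fun j hj => ?_
    rcases hj.lt_or_gt with hlt | hgt
    · exact le_sup_of_le_left (inf_le_of_left_le (hA (by omega)))
    · exact le_sup_of_le_right (inf_le_of_right_le (hB (by omega)))
  have hmeet : (A (i - 1) ⊔ B (i + 1)) ⊓ A i = A (i - 1) := by
    rw [sup_inf_assoc_of_le _ (hA (by omega)), inf_comm, (hAB i).eq_bot, sup_bot_eq]
  have hlast : A (i - 1) ⊓ B i = ⊥ := by simpa using (hAB (i - 1)).eq_bot
  refine Disjoint.mono_right hothers (disjoint_iff_inf_le.2 ?_)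
  rw [inf_right_comm, inf_comm (A i), hmeet, hlast]

lemma partialSum_inf_Iic_of_disjoint_flags (hA : Monotone A) (hB : Antitone B)
    (hAB : ∀ i, Disjoint (A i) (B (i + 1))) (htop : ⨆ i, A i ⊓ B i = ⊤) (i : ℤ) :
    partialSum (fun j => A j ⊓ B j) (Set.Iic i) = A i := by
  have hlow : partialSum (fun j => A j ⊓ B j) (Set.Iic i) ≤ A i :=
    iSup₂_le fun j hj => inf_le_of_left_le (hA hj)
  have hhigh : partialSum (fun j => A j ⊓ B j) (Set.Ici (i + 1)) ≤ B (i + 1) :=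
    iSup₂_le fun j hj => inf_le_of_right_le (hB hj)
  have hcover : ⊤ ≤ partialSum (fun j => A j ⊓ B j) (Set.Iic i) ⊔ B (i + 1) := by
    rw [← htop, iSup_split _ (· ∈ Set.Iic i)]
    refine sup_le_sup_left (le_trans (biSup_mono fun j hj => ?_) hhigh) _
    simpa [Int.add_one_le_iff] using hj
  exact eq_of_le_of_inf_le_of_sup_le hlow (hAB i |>.le_bot.trans bot_le) (le_top.trans hcover)

end OppositeFlags

section Operators

variable {K V : Type*} [Field K] [AddCommGroup V] [Module K V]

lemma linearMap_ext_of_iSup_eq_top_s12 {ι : Type*} {G : ι → Submodule K V} (hG : ⨆ i, G i = ⊤)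
    {f g : Module.End K V} (h : ∀ i, ∀ v ∈ G i, f v = g v) : f = g := by
  have hle : ⊤ ≤ LinearMap.eqLocus f g := hG ▸ iSup_le h
  exact LinearMap.ext fun v => hle Submodule.mem_top

lemma exists_end_apply_eq_smul {ι : Type*} {G : ι → Submodule K V}
    (hind : iSupIndep G) (htop : ⨆ i, G i = ⊤) (c : ι → K) :
    ∃ f : Module.End K V, ∀ i, ∀ v ∈ G i, f v = c i • v := by
  classical
  have hint : DirectSum.IsInternal G :=
    DirectSum.isInternal_submodule_of_iSupIndep_of_iSup_eq_top hind htop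
  let e := LinearEquiv.ofBijective (DirectSum.coeLinearMap G) hint
  refine ⟨(DirectSum.toModule K ι V fun i => c i • (G i).subtype) ∘ₗ e.symm.toLinearMap, ?_⟩
  intro i v hv
  have he : e.symm v = DirectSum.lof K ι (fun i => G i) i ⟨v, hv⟩ :=
    (LinearEquiv.symm_apply_eq e).2 (DirectSum.coeLinearMap_lof G i ⟨v, hv⟩).symm
  simp [he]

/-- The operator `f` acts on each member `G i` of a family of subspaces as the scalar `c i` up to
an error in `G (i + k)`. -/
def ActsWithShift (G : ℤ → Submodule K V) (k : ℤ) (c : ℤ → K) (f : Module.End K V) : Prop :=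
  ∀ i, ∀ v ∈ G i, f v - c i • v ∈ G (i + k)

namespace ActsWithShift

variable {G B : ℤ → Submodule K V} {k : ℤ} {c : ℤ → K} {f : Module.End K V}

lemma of_le_eigenspace (h : ∀ i, G i ≤ eigenspace f (c i)) (k : ℤ) : ActsWithShift G k c f :=
  fun i v hv => by
    rw [Module.End.mem_eigenspace_iff.1 (h i hv), sub_self]
    exact zero_mem _

lemma comp_const_sub (h : ActsWithShift G k c f) (d : ℤ) :
    ActsWithShift (fun i => G (d - i)) (-k) (fun i => c (d - i)) f := fun i v hv => by
  simpa only [sub_add_eq_sub_sub, sub_neg_eq_add, add_sub_right_comm] using h (d - i) v hv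

lemma inf (h : ActsWithShift G k c f) (hB : ∀ i, B i ≤ B (i + k))
    (hf : ∀ i, B i ≤ (B (i + k)).comap f) : ActsWithShift (fun i => G i ⊓ B i) k c f :=
  fun i v hv => ⟨h i v hv.1, sub_mem (hf i hv.2) (Submodule.smul_mem _ _ (hB i hv.2))⟩

lemma partialSum_le_comap (h : ActsWithShift G k c f) {S T : Set ℤ} (hST : S ⊆ T)
    (hT : ∀ j ∈ S, j + k ∈ T) : partialSum G S ≤ (partialSum G T).comap f := by
  refine iSup₂_le fun j hj v hv => ?_
  have herr : f v - c j • v ∈ partialSum G T := le_biSup G (hT j hj) (h j v hv)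
  have hmain : c j • v ∈ partialSum G T := Submodule.smul_mem _ _ (le_biSup G (hST hj) hv)
  simpa using add_mem herr hmain

lemma iSup_mem_invtSubmodule (h : ActsWithShift G k c f) : ⨆ i, G i ∈ f.invtSubmodule := by
  simpa only [partialSum, Set.mem_univ, iSup_pos, Module.End.mem_invtSubmodule] using
    h.partialSum_le_comap (Set.Subset.refl Set.univ) fun _ _ => Set.mem_univ _

lemma biSup (h : ActsWithShift G k c f) {S : ℤ → Set ℤ}
    (hS : ∀ i, ∀ j ∈ S i, j + k ∈ S (i + k)) (hS' : ∀ i, ∀ j ∈ S i, j = i ∨ j ∈ S (i + k)) :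
    ActsWithShift (fun i => partialSum G (S i)) k c f := by
  intro i
  refine iSup₂_le (a := (partialSum G (S (i + k))).comap (f - c i • 1)) fun j hj v hv => ?_
  have herr : f v - c j • v ∈ partialSum G (S (i + k)) :=
    le_biSup G (hS i j hj) (h j v hv)
  have hscalar : (c j - c i) • v ∈ partialSum G (S (i + k)) := by
    rcases hS' i j hj with rfl | hj'
    · simp
    · exact Submodule.smul_mem _ _ (le_biSup G hj' hv)
  simpa [sub_smul] using add_mem herr hscalar

lemma partialSum_Ici (h : ActsWithShift G 1 c f) :
    ActsWithShift (fun i => partialSum G (Set.Ici i)) 1 c f := by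
  refine h.biSup (fun i j hj => ?_) fun i j hj => ?_ <;> simp only [Set.mem_Ici] at * <;> omega

lemma partialSum_Iic (h : ActsWithShift G (-1) c f) :
    ActsWithShift (fun i => partialSum G (Set.Iic i)) (-1) c f := by
  refine h.biSup (fun i j hj => ?_) fun i j hj => ?_ <;> simp only [Set.mem_Iic] at * <;> omega

/-- An eigenvector for `c i` in the `k`-th term of the flag is multiplied by `c i - c k ≠ 0` modulo
the next term, so it can be moved up the flag until `k = i`. -/
lemma eigenspace_le (h : ActsWithShift G 1 c f) (hc : Function.Injective c) {m : ℤ}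
    (hm : ∀ i ≤ m, G i = ⊤) (i : ℤ) : eigenspace f (c i) ≤ G i := by
  intro v hv
  have hclimb : ∀ k, min m i ≤ k → k ≤ i → v ∈ G k := by
    intro k hk
    induction k, hk using Int.leInduction with
    | base => exact fun _ => hm _ (min_le_left m i) ▸ Submodule.mem_top
    | succ k _ ih =>
      intro hki
      have hnext := h k v (ih (by omega))
      rw [Module.End.mem_eigenspace_iff.1 hv, ← sub_smul] at hnext
      exact (Submodule.smul_mem_iff _ (sub_ne_zero.2 (hc.ne (by omega)))).1 hnext
  exact hclimb i (min_le_right m i) le_rfl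

end ActsWithShift

/-- The only subspaces invariant under all operators in `s` are the trivial ones. For `V` nonzero
this is irreducibility of `V` as a module over the algebra generated by `s`. -/
def ActsIrreducibly (s : Set (Module.End K V)) : Prop :=
  ∀ W : Submodule K V, (∀ f ∈ s, W ∈ f.invtSubmodule) → W = ⊥ ∨ W = ⊤

end Operators

section Weights

variable {K : Type*} [Field K] {q : K}

/-- The scalar `q` is generic: its integer powers are pairwise distinct. As `0 ^ n = 0` for all
`n ≠ 0`, this says that `q` is nonzero and not a root of unity. -/
def IsGeneric (q : K) : Prop := Function.Injective fun n : ℤ => q ^ n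

lemma isGeneric_of_pow_ne_one (hq : q ≠ 0) (hpow : ∀ n : ℕ, 0 < n → q ^ n ≠ 1) :
    IsGeneric q := by
  have hfin : ¬ IsOfFinOrder (Units.mk0 q hq) := by
    rw [← Units.isOfFinOrder_val, isOfFinOrder_iff_pow_eq_one]
    exact fun ⟨n, hn, hqn⟩ => hpow n hn hqn
  intro m n hmn
  exact injective_zpow_iff_not_isOfFinOrder.2 hfin (Units.ext (by simpa using hmn))

namespace IsGeneric

lemma ne_zero (hq : IsGeneric q) : q ≠ 0 := by
  rintro rfl
  exact absurd (hq (a₁ := 1) (a₂ := 2) (by simp)) (by norm_num)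

lemma inv (hq : IsGeneric q) : IsGeneric q⁻¹ := fun m n hmn =>
  hq (inv_injective (by simpa only [inv_zpow] using hmn))

lemma sub_inv_ne_zero (hq : IsGeneric q) : q - q⁻¹ ≠ 0 := fun h =>
  absurd (hq (a₁ := 1) (a₂ := -1) (by simpa using sub_eq_zero.1 h)) (by norm_num)

end IsGeneric

/-- The weight `q ^ (d - 2 i)`, with `i` running over all integers so that shifts of the index
need no case distinction. -/
def qWeight (q : K) (d i : ℤ) : K := q ^ (d - 2 * i)

lemma qWeight_ne_zero (hq : q ≠ 0) (d i : ℤ) : qWeight q d i ≠ 0 := zpow_ne_zero _ hq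

lemma qWeight_inv (q : K) (d i : ℤ) : qWeight q⁻¹ d i = (qWeight q d i)⁻¹ := inv_zpow _ _

lemma qWeight_inv_eq_qWeight_sub (q : K) (d i : ℤ) : qWeight q⁻¹ d i = qWeight q d (d - i) := by
  rw [qWeight, qWeight, inv_zpow']
  congr 1
  ring

lemma qWeight_add_one (hq : q ≠ 0) (d i : ℤ) : qWeight q d (i + 1) = q⁻¹ ^ 2 * qWeight q d i := by
  rw [qWeight, qWeight, show d - 2 * (i + 1) = -2 + (d - 2 * i) by ring, zpow_add₀ hq, zpow_neg,
    inv_pow, zpow_ofNat]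

lemma qWeight_sub_one (hq : q ≠ 0) (d i : ℤ) : qWeight q d (i - 1) = q ^ 2 * qWeight q d i := by
  rw [qWeight, qWeight, show d - 2 * (i - 1) = 2 + (d - 2 * i) by ring, zpow_add₀ hq, zpow_ofNat]

lemma IsGeneric.qWeight_injective (hq : IsGeneric q) (d : ℤ) :
    Function.Injective (qWeight q d) := fun i j hij => by
  have := hq hij
  omega

end Weights

section Spectrum

variable {K V : Type*} [Field K] [AddCommGroup V] [Module K V] {q : K} {X : Module.End K V}

/-- The eigenspace of `X` for the weight `q ^ (d - 2 i)`. -/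
def qEigenspace (q : K) (d : ℤ) (X : Module.End K V) (i : ℤ) : Submodule K V :=
  eigenspace X (qWeight q d i)

lemma mem_qEigenspace {d i : ℤ} {v : V} :
    v ∈ qEigenspace q d X i ↔ X v = qWeight q d i • v := Module.End.mem_eigenspace_iff

lemma qEigenspace_inv (q : K) (d : ℤ) (X : Module.End K V) (i : ℤ) :
    qEigenspace q⁻¹ d X i = qEigenspace q d X (d - i) := by
  rw [qEigenspace, qEigenspace, qWeight_inv_eq_qWeight_sub]

lemma iSup_qEigenspace_inv (q : K) (d : ℤ) (X : Module.End K V) :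
    ⨆ i, qEigenspace q⁻¹ d X i = ⨆ i, qEigenspace q d X i := by
  simp only [qEigenspace_inv]
  exact (Equiv.subLeft d).iSup_comp

lemma partialSum_qEigenspace_inv_Ici (q : K) (d : ℤ) (X : Module.End K V) (i : ℤ) :
    partialSum (qEigenspace q⁻¹ d X) (Set.Ici i) =
      partialSum (qEigenspace q d X) (Set.Iic (d - i)) := by
  rw [← partialSum_comp_const_sub_Ici]
  simp only [partialSum, qEigenspace_inv]

lemma IsGeneric.iSupIndep_qEigenspace (hq : IsGeneric q) (d : ℤ) (X : Module.End K V) :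
    iSupIndep (qEigenspace q d X) :=
  (Module.End.eigenspaces_iSupIndep X).comp (hq.qWeight_injective d)

lemma IsGeneric.not_qEigenspace_le_partialSum (hq : IsGeneric q) {d i : ℤ} {S : Set ℤ}
    (hi : i ∉ S) (hne : qEigenspace q d X i ≠ ⊥) :
    ¬ qEigenspace q d X i ≤ partialSum (qEigenspace q d X) S := fun hle =>
  hne (((hq.iSupIndep_qEigenspace d X).disjoint_biSup hi).eq_bot_of_le hle)

lemma actsWithShift_qEigenspace (q : K) (d : ℤ) (X : Module.End K V) (k : ℤ) :
    ActsWithShift (qEigenspace q d X) k (qWeight q d) X :=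
  .of_le_eigenspace (fun _ => le_rfl) k

lemma ActsWithShift.inv {q' : K} {d k : ℤ} {f : Module.End K V}
    (h : ActsWithShift (qEigenspace q d X) k (qWeight q' d) f) :
    ActsWithShift (qEigenspace q⁻¹ d X) (-k) (qWeight q'⁻¹ d) f := by
  simpa only [← qEigenspace_inv, ← qWeight_inv_eq_qWeight_sub] using h.comp_const_sub d

lemma actsWithShift_qEigenspace_inv_iff {q' : K} {d k : ℤ} {f : Module.End K V} :
    ActsWithShift (qEigenspace q⁻¹ d X) (-k) (qWeight q'⁻¹ d) f ↔
      ActsWithShift (qEigenspace q d X) k (qWeight q' d) f :=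
  ⟨fun h => by simpa using h.inv, fun h => h.inv⟩

/-- `X` is diagonalizable with set of eigenvalues `{q ^ (d - 2 i) : 0 ≤ i ≤ d}`. -/
structure HasQSpectrum (q : K) (d : ℕ) (X : Module.End K V) : Prop where
  iSup_eq_top : ⨆ i, qEigenspace q d X i = ⊤
  ne_bot_iff : ∀ i, qEigenspace q d X i ≠ ⊥ ↔ i ∈ Set.Icc 0 (d : ℤ)

namespace HasQSpectrum

variable {d : ℕ}

lemma eq_bot (hX : HasQSpectrum q d X) {i : ℤ} (hi : i ∉ Set.Icc 0 (d : ℤ)) :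
    qEigenspace q d X i = ⊥ := not_not.1 fun h => hi ((hX.ne_bot_iff i).1 h)

lemma inv (hX : HasQSpectrum q d X) : HasQSpectrum q⁻¹ d X where
  iSup_eq_top := by rw [iSup_qEigenspace_inv, hX.iSup_eq_top]
  ne_bot_iff i := by
    rw [qEigenspace_inv, hX.ne_bot_iff, Set.mem_Icc, Set.mem_Icc]
    omega

lemma partialSum_Ici_eq_top (hX : HasQSpectrum q d X) {i : ℤ} (hi : i ≤ 0) :
    partialSum (qEigenspace q d X) (Set.Ici i) = ⊤ := by
  rw [← hX.iSup_eq_top]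
  exact partialSum_eq_iSup fun j hj => hX.eq_bot fun hj' => hj (hi.trans hj'.1)

lemma partialSum_Iic_eq_bot (hX : HasQSpectrum q d X) {i : ℤ} (hi : i < 0) :
    partialSum (qEigenspace q d X) (Set.Iic i) = ⊥ :=
  iSup₂_eq_bot.2 fun j hj => hX.eq_bot fun hj' => by
    simp only [Set.mem_Iic, Set.mem_Icc] at hj hj'
    omega

lemma partialSum_Ici_eq_bot (hX : HasQSpectrum q d X) {i : ℤ} (hi : d < i) :
    partialSum (qEigenspace q d X) (Set.Ici i) = ⊥ :=
  iSup₂_eq_bot.2 fun j hj => hX.eq_bot fun hj' => by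
    simp only [Set.mem_Ici, Set.mem_Icc] at hj hj'
    omega

end HasQSpectrum

end Spectrum

section Weyl

variable {K V : Type*} [Field K] [AddCommGroup V] [Module K V] {q : K}
  {X Y : Module.End K V}

/-- The `q`-Weyl relation `q X Y - q⁻¹ Y X = q - q⁻¹`. -/
def Weyl (q : K) (X Y : Module.End K V) : Prop :=
  q • (X * Y) - q⁻¹ • (Y * X) = (q - q⁻¹) • (1 : Module.End K V)

lemma weyl_inv_iff : Weyl q⁻¹ Y X ↔ Weyl q X Y := by
  rw [Weyl, Weyl, inv_inv, ← neg_sub (q • _), ← neg_sub q, neg_smul, neg_inj]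

lemma weyl_apply_iff (hq : q ≠ 0) {θ : K} (hθ : θ ≠ 0) {v : V} (hv : X v = θ • v) :
    (q • (X * Y) - q⁻¹ • (Y * X)) v = (q - q⁻¹) • v ↔
      Y v - θ⁻¹ • v ∈ eigenspace X (q⁻¹ ^ 2 * θ) := by
  have hdefect : X (Y v - θ⁻¹ • v) - (q⁻¹ ^ 2 * θ) • (Y v - θ⁻¹ • v) =
      q⁻¹ • ((q • (X * Y) - q⁻¹ • (Y * X)) v - (q - q⁻¹) • v) := by
    simp only [LinearMap.sub_apply, LinearMap.smul_apply, Module.End.mul_apply, map_sub, map_smul,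
      hv]
    match_scalars <;> field_simp
    ring
  rw [Module.End.mem_eigenspace_iff, ← sub_eq_zero (a := X _), hdefect,
    smul_eq_zero_iff_right (inv_ne_zero hq), sub_eq_zero]

lemma weyl_iff_actsWithShift_right (hq : q ≠ 0) {d : ℤ} (hX : ⨆ i, qEigenspace q d X i = ⊤) :
    Weyl q X Y ↔ ActsWithShift (qEigenspace q d X) 1 (qWeight q⁻¹ d) Y := by
  have hvec {i : ℤ} {v : V} (hv : v ∈ qEigenspace q d X i) :
      (q • (X * Y) - q⁻¹ • (Y * X)) v = (q - q⁻¹) • v ↔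
        Y v - qWeight q⁻¹ d i • v ∈ qEigenspace q d X (i + 1) := by
    rw [qEigenspace, qWeight_add_one hq, qWeight_inv]
    exact weyl_apply_iff hq (qWeight_ne_zero hq d i) (mem_qEigenspace.1 hv)
  constructor
  · exact fun h i v hv => (hvec hv).1 (DFunLike.congr_fun h v)
  · exact fun h => linearMap_ext_of_iSup_eq_top_s12 hX fun i v hv => (hvec hv).2 (h i v hv)

lemma weyl_iff_actsWithShift_left (hq : q ≠ 0) {d : ℤ} (hY : ⨆ i, qEigenspace q d Y i = ⊤) :
    Weyl q X Y ↔ ActsWithShift (qEigenspace q⁻¹ d Y) 1 (qWeight q d) X := by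
  rw [← iSup_qEigenspace_inv] at hY
  rw [← weyl_inv_iff, weyl_iff_actsWithShift_right (inv_ne_zero hq) hY, inv_inv]

lemma weyl_iff_actsWithShift_neg_right (hq : q ≠ 0) {d : ℤ} (hX : ⨆ i, qEigenspace q d X i = ⊤) :
    Weyl q X Y ↔ ActsWithShift (qEigenspace q⁻¹ d X) (-1) (qWeight q d) Y := by
  rw [weyl_iff_actsWithShift_right hq hX, ← actsWithShift_qEigenspace_inv_iff, inv_inv]

lemma weyl_iff_actsWithShift_neg_left (hq : q ≠ 0) {d : ℤ} (hY : ⨆ i, qEigenspace q d Y i = ⊤) :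
    Weyl q X Y ↔ ActsWithShift (qEigenspace q d Y) (-1) (qWeight q⁻¹ d) X := by
  rw [weyl_iff_actsWithShift_left hq hY, ← actsWithShift_qEigenspace_inv_iff, inv_inv]

end Weyl

section Flags

variable {K V : Type*} [Field K] [AddCommGroup V] [Module K V] {q : K} {d : ℕ}
  {X Y Z : Module.End K V}

lemma ActsWithShift.partialSum_qEigenspace_le {G : ℤ → Submodule K V} (hq : IsGeneric q)
    {d : ℤ} (h : ActsWithShift G 1 (qWeight q d) X) {m : ℤ}
    (hG : ∀ i ≤ m, partialSum G (Set.Ici i) = ⊤) (i : ℤ) :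
    partialSum (qEigenspace q d X) (Set.Ici i) ≤ partialSum G (Set.Ici i) :=
  iSup₂_le fun j hj => (h.partialSum_Ici.eigenspace_le (hq.qWeight_injective d) hG j).trans
    (antitone_partialSum_Ici G hj)

lemma Weyl.partialSum_Ici_eq (hq : IsGeneric q) (hXY : Weyl q X Y) (hX : HasQSpectrum q d X)
    (hY : HasQSpectrum q d Y) (i : ℤ) :
    partialSum (qEigenspace q d X) (Set.Ici i) = partialSum (qEigenspace q⁻¹ d Y) (Set.Ici i) := by
  have hXon := (weyl_iff_actsWithShift_left hq.ne_zero hY.iSup_eq_top).1 hXY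
  have hYon := (weyl_iff_actsWithShift_right hq.ne_zero hX.iSup_eq_top).1 hXY
  exact le_antisymm
    (hXon.partialSum_qEigenspace_le hq (fun _ hj => hY.inv.partialSum_Ici_eq_top hj) i)
    (hYon.partialSum_qEigenspace_le hq.inv (fun _ hj => hX.partialSum_Ici_eq_top hj) i)

lemma Weyl.partialSum_Iic_eq (hq : IsGeneric q) (hYZ : Weyl q Y Z) (hY : HasQSpectrum q d Y)
    (hZ : HasQSpectrum q d Z) (i : ℤ) :
    partialSum (qEigenspace q⁻¹ d Y) (Set.Iic i) = partialSum (qEigenspace q d Z) (Set.Iic i) := by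
  have hflag := (weyl_inv_iff.2 hYZ).partialSum_Ici_eq hq.inv hZ.inv hY.inv (d - i)
  rw [partialSum_qEigenspace_inv_Ici, partialSum_qEigenspace_inv_Ici, sub_sub_cancel] at hflag
  exact hflag.symm

/-- The intersection of the sum of the eigenspaces of `Z` up to index `i` with the sum of those of
`X` from index `j` on. The subspaces with `i = j` form the split decomposition for `X` and `Z`. -/
def flagInf (q : K) (d : ℤ) (X Z : Module.End K V) (i j : ℤ) : Submodule K V :=
  partialSum (qEigenspace q d Z) (Set.Iic i) ⊓ partialSum (qEigenspace q d X) (Set.Ici j)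

lemma flagInf_eq_partialSum (hq : IsGeneric q) (hXY : Weyl q X Y) (hYZ : Weyl q Y Z)
    (hX : HasQSpectrum q d X) (hY : HasQSpectrum q d Y) (hZ : HasQSpectrum q d Z) (i j : ℤ) :
    flagInf q d X Z i j = partialSum (qEigenspace q⁻¹ d Y) (Set.Icc j i) := by
  rw [flagInf, ← hYZ.partialSum_Iic_eq hq hY hZ, hXY.partialSum_Ici_eq hq hX hY,
    partialSum_inf_partialSum (hq.inv.iSupIndep_qEigenspace d Y), Set.inter_comm,
    Set.Ici_inter_Iic]

lemma flagInf_self (hq : IsGeneric q) (hXY : Weyl q X Y) (hYZ : Weyl q Y Z)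
    (hX : HasQSpectrum q d X) (hY : HasQSpectrum q d Y) (hZ : HasQSpectrum q d Z) (i : ℤ) :
    flagInf q d X Z i i = qEigenspace q⁻¹ d Y i := by
  rw [flagInf_eq_partialSum hq hXY hYZ hX hY hZ, Set.Icc_self, partialSum, iSup_singleton]

/-- The eigenspaces of an operator between `X` and `Z` are cut out by the flags of `X` and `Z`. -/
lemma Weyl.unique (hq : IsGeneric q) {Y' : Module.End K V} (hX : HasQSpectrum q d X)
    (hZ : HasQSpectrum q d Z) (hY : HasQSpectrum q d Y) (hY' : HasQSpectrum q d Y')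
    (hXY : Weyl q X Y) (hYZ : Weyl q Y Z) (hXY' : Weyl q X Y') (hYZ' : Weyl q Y' Z) : Y = Y' := by
  refine linearMap_ext_of_iSup_eq_top_s12 hY.inv.iSup_eq_top fun i v hv => ?_
  have hv' : v ∈ qEigenspace q⁻¹ d Y' i := by
    rwa [← flagInf_self hq hXY' hYZ' hX hY' hZ, flagInf_self hq hXY hYZ hX hY hZ]
  rw [mem_qEigenspace.1 hv, mem_qEigenspace.1 hv']

end Flags

section Serre

variable {K V : Type*} [Field K] [AddCommGroup V] [Module K V] {q : K} {X Z : Module.End K V}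

/-- The cubic `q`-Serre relation, written without negative terms. -/
def Serre (q : K) (X Z : Module.End K V) : Prop :=
  X ^ 3 * Z + ((q ^ 3 - q⁻¹ ^ 3) / (q - q⁻¹)) • (X * Z * X ^ 2) =
    ((q ^ 3 - q⁻¹ ^ 3) / (q - q⁻¹)) • (X ^ 2 * Z * X) + Z * X ^ 3

lemma IsGeneric.cube_sub_div_sub (hq : IsGeneric q) :
    (q ^ 3 - q⁻¹ ^ 3) / (q - q⁻¹) = q ^ 2 + 1 + q⁻¹ ^ 2 := by
  rw [div_eq_iff hq.sub_inv_ne_zero]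
  linear_combination (q - q⁻¹) * mul_inv_cancel₀ hq.ne_zero

lemma ker_aeval_prod_X_sub_C {ι : Type*} {μ : ι → K} (hμ : Function.Injective μ)
    (f : Module.End K V) (s : Finset ι) :
    LinearMap.ker (Polynomial.aeval f (∏ j ∈ s, (Polynomial.X - Polynomial.C (μ j)))) =
      ⨆ j ∈ s, eigenspace f (μ j) := by
  classical
  induction s using Finset.induction_on with
  | empty => simp [Module.End.one_eq_id]
  | insert a s ha ih =>
    have hcoprime : IsCoprime (Polynomial.X - Polynomial.C (μ a))
        (∏ j ∈ s, (Polynomial.X - Polynomial.C (μ j))) :=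
      IsCoprime.prod_right fun j hj =>
        Polynomial.pairwise_coprime_X_sub_C hμ fun haj => ha (haj ▸ hj)
    rw [Finset.prod_insert ha, ← Polynomial.sup_ker_aeval_eq_ker_aeval_mul_of_coprime f hcoprime,
      ih, Finset.iSup_insert, Module.End.eigenspace_def]
    simp [Algebra.algebraMap_eq_smul_one]

lemma partialSum_qEigenspace_Icc (hq : IsGeneric q) (d i : ℤ) :
    partialSum (qEigenspace q d X) (Set.Icc (i - 1) (i + 1)) =
      LinearMap.ker (Polynomial.aeval X
        ((Polynomial.X - Polynomial.C (q ^ 2 * qWeight q d i)) *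
          ((Polynomial.X - Polynomial.C (qWeight q d i)) *
            (Polynomial.X - Polynomial.C (q⁻¹ ^ 2 * qWeight q d i))))) := by
  have hIcc : Finset.Icc (i - 1) (i + 1) = {i - 1, i, i + 1} := by
    ext j
    simp only [Finset.mem_Icc, Finset.mem_insert, Finset.mem_singleton]
    omega
  have hprod : ∏ j ∈ Finset.Icc (i - 1) (i + 1), (Polynomial.X - Polynomial.C (qWeight q d j)) =
      (Polynomial.X - Polynomial.C (q ^ 2 * qWeight q d i)) *
        ((Polynomial.X - Polynomial.C (qWeight q d i)) *
          (Polynomial.X - Polynomial.C (q⁻¹ ^ 2 * qWeight q d i))) := by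
    rw [hIcc, Finset.prod_insert (by simp; omega), Finset.prod_pair (by simp),
      qWeight_sub_one hq.ne_zero, qWeight_add_one hq.ne_zero]
  rw [← hprod, ker_aeval_prod_X_sub_C (hq.qWeight_injective d)]
  simp only [partialSum, ← Finset.mem_coe, Finset.coe_Icc, qEigenspace]

/-- For an eigenvector `v` of `X` with eigenvalue `θ`, the Serre relation applied to `v` reads
`(X - q ^ 2 θ) (X - θ) (X - q⁻¹ ^ 2 θ) (Z v) = 0`. -/
lemma serre_apply_iff (hq : IsGeneric q) {d i : ℤ} {v : V} (hv : v ∈ qEigenspace q d X i) :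
    (X ^ 3 * Z + ((q ^ 3 - q⁻¹ ^ 3) / (q - q⁻¹)) • (X * Z * X ^ 2)) v =
        (((q ^ 3 - q⁻¹ ^ 3) / (q - q⁻¹)) • (X ^ 2 * Z * X) + Z * X ^ 3) v ↔
      Z v ∈ partialSum (qEigenspace q d X) (Set.Icc (i - 1) (i + 1)) := by
  have hcancel : q ^ 2 * q⁻¹ ^ 2 = 1 := by rw [← mul_pow, mul_inv_cancel₀ hq.ne_zero, one_pow]
  have hXv := mem_qEigenspace.1 hv
  rw [partialSum_qEigenspace_Icc hq, LinearMap.mem_ker, ← sub_eq_zero, hq.cube_sub_div_sub]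
  generalize qWeight q d i = θ at hXv ⊢
  refine Eq.congr_left ?_
  simp only [pow_succ, pow_zero, one_mul, map_mul, map_sub, Polynomial.aeval_X, Polynomial.aeval_C,
    LinearMap.sub_apply, LinearMap.add_apply, LinearMap.smul_apply, Module.End.mul_apply,
    Module.algebraMap_end_apply, map_smul, hXv]
  match_scalars
  · ring
  · linear_combination (-θ ^ 2) * hcancel
  · ring
  · linear_combination θ ^ 3 * hcancel

lemma serre_iff_apply_mem (hq : IsGeneric q) {d : ℤ} (hX : ⨆ i, qEigenspace q d X i = ⊤) :
    Serre q X Z ↔ ∀ i, ∀ v ∈ qEigenspace q d X i,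
      Z v ∈ partialSum (qEigenspace q d X) (Set.Icc (i - 1) (i + 1)) := by
  constructor
  · exact fun h i v hv => (serre_apply_iff hq hv).1 (DFunLike.congr_fun h v)
  · exact fun h => linearMap_ext_of_iSup_eq_top_s12 hX fun i v hv =>
      (serre_apply_iff hq hv).2 (h i v hv)

lemma serre_inv_iff : Serre q⁻¹ X Z ↔ Serre q X Z := by
  rw [Serre, Serre, inv_inv, ← neg_sub q, ← neg_sub (q ^ 3), neg_div_neg_eq]

end Serre

section WeylCycle

variable {K V : Type*} [Field K] [AddCommGroup V] [Module K V] {q : K} {d : ℕ}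
  {f g : ZMod 4 → Module.End K V}

/-- Four operators arranged in a cycle, each with spectrum `{q ^ (d - 2 i) : 0 ≤ i ≤ d}` and
consecutive ones in the `q`-Weyl relation. -/
structure WeylCycle (q : K) (d : ℕ) (f : ZMod 4 → Module.End K V) : Prop where
  weyl : ∀ i, Weyl q (f i) (f (i + 1))
  spectrum : ∀ i, HasQSpectrum q d (f i)

namespace WeylCycle

lemma rotate (hf : WeylCycle q d f) (k : ZMod 4) : WeylCycle q d fun i => f (i + k) where
  weyl i := by simpa only [add_right_comm] using hf.weyl (i + k)
  spectrum i := hf.spectrum (i + k)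

lemma flagInf_eq (hf : WeylCycle q d f) (hq : IsGeneric q) (i j : ℤ) :
    flagInf q d (f 0) (f 2) i j = partialSum (qEigenspace q⁻¹ d (f 1)) (Set.Icc j i) :=
  flagInf_eq_partialSum hq (hf.weyl 0) (hf.weyl 1) (hf.spectrum 0) (hf.spectrum 1)
    (hf.spectrum 2) i j

/-- The eigenspaces of `f 1` are intersections of terms of the flags of `f 0` and `f 2`, and `f 3`
moves each of these flags by one step. -/
lemma serre_one_three (hf : WeylCycle q d f) (hq : IsGeneric q) : Serre q (f 1) (f 3) := by
  have h3on0 := (weyl_iff_actsWithShift_neg_left hq.ne_zero (hf.spectrum 0).iSup_eq_top).1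
    (hf.weyl 3)
  have h3on2 := (weyl_iff_actsWithShift_right hq.ne_zero (hf.spectrum 2).iSup_eq_top).1
    (hf.weyl 2)
  rw [← serre_inv_iff, serre_iff_apply_mem hq.inv (hf.spectrum 1).inv.iSup_eq_top]
  intro i v hv
  have hflag : v ∈ flagInf q d (f 0) (f 2) i i := by
    rwa [hf.flagInf_eq hq, Set.Icc_self, partialSum, iSup_singleton]
  rw [← hf.flagInf_eq hq]
  refine ⟨?_, ?_⟩
  · exact h3on2.partialSum_le_comap (Set.Iic_subset_Iic.2 (by omega))
      (fun j hj => add_le_add_left hj 1) hflag.1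
  · exact h3on0.partialSum_le_comap (Set.Ici_subset_Ici.2 (by omega))
      (fun j hj => add_le_add_left hj (-1)) hflag.2

lemma serre (hf : WeylCycle q d f) (hq : IsGeneric q) (i : ZMod 4) :
    Serre q (f i) (f (i + 2)) := by
  have h := (hf.rotate (i - 1)).serre_one_three hq
  rwa [add_sub_cancel, show 3 + (i - 1) = i + 2 by ring] at h

lemma eq_one (hf : WeylCycle q d f) (hg : WeylCycle q d g) (hq : IsGeneric q) (h0 : f 0 = g 0)
    (h2 : f 2 = g 2) : f 1 = g 1 :=
  Weyl.unique hq (hf.spectrum 0) (hf.spectrum 2) (hf.spectrum 1) (hg.spectrum 1) (hf.weyl 0)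
    (hf.weyl 1) (h0 ▸ hg.weyl 0) (h2 ▸ hg.weyl 1)

lemma eq_of_eq_zero_of_eq_two (hf : WeylCycle q d f) (hg : WeylCycle q d g) (hq : IsGeneric q)
    (h0 : f 0 = g 0) (h2 : f 2 = g 2) : f = g := by
  have h3 : f 3 = g 3 := (hf.rotate 2).eq_one (hg.rotate 2) hq h2 h0
  funext i
  fin_cases i
  exacts [h0, hf.eq_one hg hq h0 h2, h2, h3]

end WeylCycle

end WeylCycle

section SplitDecomposition

variable {K V : Type*} [Field K] [AddCommGroup V] [Module K V] {q : K} {d : ℕ}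
  {X Z : Module.End K V}

/-- A tridiagonal pair of `q`-geometric type: two operators with spectrum
`{q ^ (d - 2 i) : 0 ≤ i ≤ d}` that satisfy the `q`-Serre relations and act irreducibly. -/
structure IsQGeometricPair (q : K) (d : ℕ) (X Z : Module.End K V) : Prop where
  spectrum_left : HasQSpectrum q d X
  spectrum_right : HasQSpectrum q d Z
  serre_left : Serre q X Z
  serre_right : Serre q Z X
  irreducible : ActsIrreducibly {X, Z}

lemma Serre.partialSum_le_comap (h : Serre q X Z) (hq : IsGeneric q) {d : ℤ}
    (hX : ⨆ i, qEigenspace q d X i = ⊤) {S T : Set ℤ} (hST : ∀ i ∈ S, Set.Icc (i - 1) (i + 1) ⊆ T) :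
    partialSum (qEigenspace q d X) S ≤ (partialSum (qEigenspace q d X) T).comap Z :=
  iSup₂_le fun i hi v hv =>
    partialSum_mono (qEigenspace q d X) (hST i hi) ((serre_iff_apply_mem hq hX).1 h i v hv)

namespace IsQGeometricPair

lemma swap (h : IsQGeometricPair q d X Z) : IsQGeometricPair q d Z X :=
  ⟨h.spectrum_right, h.spectrum_left, h.serre_right, h.serre_left,
    Set.pair_comm X Z ▸ h.irreducible⟩

lemma actsWithShift_flagInf_left (h : IsQGeometricPair q d X Z) (hq : IsGeneric q) (r : ℤ) :
    ActsWithShift (fun i => flagInf q d X Z i (i + r)) 1 (fun i => qWeight q d (i + r)) X := by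
  have hflag : ActsWithShift (fun i => partialSum (qEigenspace q d X) (Set.Ici (i + r))) 1
      (fun i => qWeight q d (i + r)) X := fun i v hv => by
    simpa only [add_right_comm] using
      (actsWithShift_qEigenspace q d X 1).partialSum_Ici (i + r) v hv
  have hinf := hflag.inf (B := fun i => partialSum (qEigenspace q d Z) (Set.Iic i))
    (fun i => monotone_partialSum_Iic _ (by omega)) fun i =>
      h.serre_right.partialSum_le_comap hq h.spectrum_right.iSup_eq_top fun _ hj =>
        Set.Icc_subset_Iic_self.trans (Set.Iic_subset_Iic.2 (add_le_add_left hj 1))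
  simpa only [flagInf, inf_comm] using hinf

lemma actsWithShift_flagInf_right (h : IsQGeometricPair q d X Z) (hq : IsGeneric q) (r : ℤ) :
    ActsWithShift (fun i => flagInf q d X Z i (i + r)) (-1) (qWeight q d) Z := by
  refine (actsWithShift_qEigenspace q d Z (-1)).partialSum_Iic.inf (fun i => ?_) fun i => ?_
  · exact antitone_partialSum_Ici (qEigenspace q d X) (by omega)
  · refine h.serre_left.partialSum_le_comap hq h.spectrum_left.iSup_eq_top fun j hj => ?_
    refine Set.Icc_subset_Ici_self.trans (Set.Ici_subset_Ici.2 ?_)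
    simpa only [sub_eq_add_neg, add_right_comm] using sub_le_sub_right (Set.mem_Ici.1 hj) 1

lemma iSup_flagInf_eq_bot_or_eq_top (h : IsQGeometricPair q d X Z) (hq : IsGeneric q) (r : ℤ) :
    ⨆ i, flagInf q d X Z i (i + r) = ⊥ ∨ ⨆ i, flagInf q d X Z i (i + r) = ⊤ := by
  refine h.irreducible _ ?_
  rintro f (rfl | rfl)
  exacts [(h.actsWithShift_flagInf_left hq r).iSup_mem_invtSubmodule,
    (h.actsWithShift_flagInf_right hq r).iSup_mem_invtSubmodule]

lemma disjoint_flags (h : IsQGeometricPair q d X Z) (hq : IsGeneric q) (i : ℤ) :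
    Disjoint (partialSum (qEigenspace q d Z) (Set.Iic i))
      (partialSum (qEigenspace q d X) (Set.Ici (i + 1))) := by
  have hle : ⨆ j, flagInf q d X Z j (j + 1) ≤ partialSum (qEigenspace q d X) (Set.Ici 1) := by
    refine iSup_le fun j => ?_
    rcases lt_or_ge j 0 with hj | hj
    · rw [flagInf, h.spectrum_right.partialSum_Iic_eq_bot hj, bot_inf_eq]
      exact bot_le
    · exact inf_le_of_right_le (antitone_partialSum_Ici _ (by omega))
  have hne : ⨆ j, flagInf q d X Z j (j + 1) ≠ ⊤ := fun htop =>
    hq.not_qEigenspace_le_partialSum (by simp) ((h.spectrum_left.ne_bot_iff 0).2 (by simp))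
      (le_top.trans (htop ▸ hle))
  have hbot := ((h.iSup_flagInf_eq_bot_or_eq_top hq 1).resolve_right hne)
  exact disjoint_iff.2 (iSup_eq_bot.1 hbot i)

lemma iSup_flagInf_self (h : IsQGeometricPair q d X Z) (hq : IsGeneric q) :
    ⨆ i, flagInf q d X Z i i = ⊤ := by
  have hne : ⨆ i, flagInf q d X Z i i ≠ ⊥ := fun hbot => by
    have h00 := iSup_eq_bot.1 hbot 0
    rw [flagInf, h.spectrum_left.partialSum_Ici_eq_top le_rfl, inf_top_eq] at h00
    exact (h.spectrum_right.ne_bot_iff 0).2 (by simp) (iSup₂_eq_bot.1 h00 0 (Set.mem_Iic.2 le_rfl))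
  simpa only [add_zero] using (h.iSup_flagInf_eq_bot_or_eq_top hq 0).resolve_left
    (by simpa only [add_zero] using hne)

lemma iSupIndep_flagInf_self (h : IsQGeometricPair q d X Z) (hq : IsGeneric q) :
    iSupIndep fun i => flagInf q d X Z i i :=
  iSupIndep_inf_of_disjoint_flags (monotone_partialSum_Iic _) (antitone_partialSum_Ici _)
    (h.disjoint_flags hq)

lemma flagInf_self_ne_bot_iff (h : IsQGeometricPair q d X Z) (hq : IsGeneric q) (i : ℤ) :
    flagInf q d X Z i i ≠ ⊥ ↔ i ∈ Set.Icc 0 (d : ℤ) := by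
  constructor
  · refine fun hne => ⟨not_lt.1 fun hi => hne ?_, not_lt.1 fun hi => hne ?_⟩
    · rw [flagInf, h.spectrum_right.partialSum_Iic_eq_bot hi, bot_inf_eq]
    · rw [flagInf, h.spectrum_left.partialSum_Ici_eq_bot hi, inf_bot_eq]
  · intro hi hbot
    have hflag : ∀ j, partialSum (fun k => flagInf q d X Z k k) (Set.Iic j) =
        partialSum (qEigenspace q d Z) (Set.Iic j) :=
      partialSum_inf_Iic_of_disjoint_flags (monotone_partialSum_Iic _)
        (antitone_partialSum_Ici _) (h.disjoint_flags hq) (h.iSup_flagInf_self hq)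
    refine hq.not_qEigenspace_le_partialSum (S := Set.Iic (i - 1)) (by simp)
      ((h.spectrum_right.ne_bot_iff i).2 hi) ?_
    have hstep : partialSum (qEigenspace q d Z) (Set.Iic i) ≤
        partialSum (qEigenspace q d Z) (Set.Iic (i - 1)) := by
      rw [← hflag i, ← hflag (i - 1)]
      refine iSup₂_le fun j hj => ?_
      rcases (Set.mem_Iic.1 hj).eq_or_lt with rfl | hlt
      · exact hbot.le.trans bot_le
      · exact le_biSup (fun k => flagInf q d X Z k k) (Set.mem_Iic.2 (by omega))
    exact (le_biSup (qEigenspace q d Z) (Set.mem_Iic.2 le_rfl)).trans hstep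

lemma exists_weyl (h : IsQGeometricPair q d X Z) (hq : IsGeneric q) :
    ∃ Y, HasQSpectrum q d Y ∧ Weyl q X Y ∧ Weyl q Y Z := by
  obtain ⟨Y, hY⟩ := exists_end_apply_eq_smul (h.iSupIndep_flagInf_self hq)
    (h.iSup_flagInf_self hq) (qWeight q⁻¹ d)
  have heig : (fun i => flagInf q d X Z i i) = qEigenspace q⁻¹ d Y :=
    ((hq.inv.iSupIndep_qEigenspace d Y).le_iff_eq_of_iSup_eq_top (h.iSup_flagInf_self hq)).1
      fun i v hv => mem_qEigenspace.2 (hY i v hv)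
  have hspec : HasQSpectrum q⁻¹ d Y :=
    ⟨heig ▸ h.iSup_flagInf_self hq, fun i => heig ▸ h.flagInf_self_ne_bot_iff hq i⟩
  have hspec' : HasQSpectrum q d Y := inv_inv q ▸ hspec.inv
  refine ⟨Y, hspec', ?_, ?_⟩
  · rw [weyl_iff_actsWithShift_left hq.ne_zero hspec'.iSup_eq_top, ← heig]
    simpa only [add_zero] using h.actsWithShift_flagInf_left hq 0
  · rw [weyl_iff_actsWithShift_neg_right hq.ne_zero hspec'.iSup_eq_top, ← heig]
    simpa only [add_zero] using h.actsWithShift_flagInf_right hq 0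

lemma exists_weylCycle (h : IsQGeometricPair q d X Z) (hq : IsGeneric q) :
    ∃ f, WeylCycle q d f ∧ f 0 = X ∧ f 2 = Z := by
  obtain ⟨Y, hY, hXY, hYZ⟩ := h.exists_weyl hq
  obtain ⟨Y', hY', hZY', hY'X⟩ := h.swap.exists_weyl hq
  refine ⟨![X, Y, Z, Y'], ⟨fun i => ?_, fun i => ?_⟩, rfl, rfl⟩
  · fin_cases i
    exacts [hXY, hYZ, hZY', hY'X]
  · fin_cases i
    exacts [h.spectrum_left, hY, h.spectrum_right, hY']

end IsQGeometricPair

end SplitDecomposition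

section Restriction

variable {K V : Type*} [Field K] [AddCommGroup V] [Module K V] {q : K} {d : ℕ}
  {X : Module.End K V} {W : Submodule K V} {f : ZMod 4 → Module.End K V} {s t : ℤ}

lemma exists_eq_of_eigenspace_ne_bot {ι : Type*} {θ : ι → K} {μ : K}
    (htop : ⨆ i, eigenspace X (θ i) = ⊤) (hμ : eigenspace X μ ≠ ⊥) : ∃ i, θ i = μ := by
  by_contra! hne
  have hle : ⊤ ≤ ⨆ ν, ⨆ (_ : ν ≠ μ), eigenspace X ν :=
    htop ▸ iSup_le fun i => le_biSup (eigenspace X) (hne i)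
  exact hμ ((Module.End.eigenspaces_iSupIndep X μ).eq_bot_of_le (le_top.trans hle))

lemma iSup_inf_eigenspace_eq [FiniteDimensional K V] {ι : Type*} {θ : ι → K}
    (htop : ⨆ i, eigenspace X (θ i) = ⊤) (hW : W ∈ X.invtSubmodule) :
    ⨆ i, W ⊓ eigenspace X (θ i) = W := by
  have htop' : ⨆ μ, eigenspace X μ = ⊤ :=
    top_le_iff.1 (htop ▸ iSup_le fun i => le_iSup (eigenspace X) (θ i))
  refine le_antisymm (iSup_le fun i => inf_le_left) ?_
  conv_lhs => rw [Submodule.eq_iSup_inf_genEigenspace 1 hW htop']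
  refine iSup_le fun μ => ?_
  by_cases hμ : eigenspace X μ = ⊥
  · exact inf_le_of_right_le (hμ.le.trans bot_le)
  · obtain ⟨i, rfl⟩ := exists_eq_of_eigenspace_ne_bot htop hμ
    exact le_iSup (fun i => W ⊓ eigenspace X (θ i)) i

/-- The least index of an eigenvector of `X` in the `X`-invariant subspace `W` is `t`. -/
structure IsEndpoint (q : K) (d : ℤ) (X : Module.End K V) (W : Submodule K V) (t : ℤ) : Prop where
  le_partialSum : W ≤ partialSum (qEigenspace q d X) (Set.Ici t)
  inf_ne_bot : W ⊓ qEigenspace q d X t ≠ ⊥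

lemma HasQSpectrum.exists_isEndpoint [FiniteDimensional K V] (hX : HasQSpectrum q d X)
    (hne : W ≠ ⊥) (hW : W ∈ X.invtSubmodule) : ∃ t, IsEndpoint q d X W t := by
  have hdecomp : ⨆ i, W ⊓ qEigenspace q d X i = W := iSup_inf_eigenspace_eq hX.iSup_eq_top hW
  have hex : ∃ i, W ⊓ qEigenspace q d X i ≠ ⊥ := by
    by_contra! hbot
    exact hne (by rw [← hdecomp, iSup_eq_bot.2 hbot])
  have hbdd : ∀ i, W ⊓ qEigenspace q d X i ≠ ⊥ → 0 ≤ i := fun i hi =>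
    ((hX.ne_bot_iff i).1 fun hbot => hi (by rw [hbot, inf_bot_eq])).1
  obtain ⟨t, ht, hleast⟩ := Int.exists_least_of_bdd ⟨0, hbdd⟩ hex
  refine ⟨t, hdecomp.symm.trans_le (iSup_le fun i => ?_), ht⟩
  by_cases hi : W ⊓ qEigenspace q d X i = ⊥
  · exact hi.le.trans bot_le
  · exact inf_le_of_right_le (le_biSup (qEigenspace q d X) (hleast i hi))

namespace WeylCycle

lemma inf_qEigenspace_two_le (hf : WeylCycle q d f) (hq : IsGeneric q)
    (h0 : IsEndpoint q d (f 0) W t) (s : ℤ) :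
    W ⊓ qEigenspace q d (f 2) s ≤ partialSum (qEigenspace q⁻¹ d (f 1)) (Set.Icc t s) := by
  rw [← hf.flagInf_eq hq, flagInf, inf_comm]
  exact inf_le_inf (le_biSup (qEigenspace q d (f 2)) (Set.mem_Iic.2 le_rfl)) h0.le_partialSum

lemma endpoint_le (hf : WeylCycle q d f) (hq : IsGeneric q) (h0 : IsEndpoint q d (f 0) W t)
    (h2 : IsEndpoint q d (f 2) W s) : t ≤ s := by
  by_contra hlt
  refine h2.inf_ne_bot (eq_bot_iff.2 ((hf.inf_qEigenspace_two_le hq h0 s).trans ?_))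
  rw [Set.Icc_eq_empty hlt, partialSum, iSup_emptyset]

lemma inf_qEigenspace_one_ne_bot (hf : WeylCycle q d f) (hq : IsGeneric q)
    (h0 : IsEndpoint q d (f 0) W t) (h2 : IsEndpoint q d (f 2) W t) :
    W ⊓ qEigenspace q⁻¹ d (f 1) t ≠ ⊥ := by
  have hle := hf.inf_qEigenspace_two_le hq h0 t
  rw [Set.Icc_self, partialSum, iSup_singleton] at hle
  exact ne_bot_of_le_ne_bot h2.inf_ne_bot (le_inf inf_le_left hle)

/-- The sum of the intersections of `W` with the eigenspaces of `f 1` is invariant under `f 0` and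
`f 2`, so by minimality it is `W`. -/
lemma mem_invtSubmodule_one_of_minimal (hf : WeylCycle q d f) (hq : IsGeneric q)
    (hW : Minimal (fun U => U ≠ ⊥ ∧ U ∈ (f 0).invtSubmodule ∧ U ∈ (f 2).invtSubmodule) W)
    (ht : W ⊓ qEigenspace q⁻¹ d (f 1) t ≠ ⊥) : W ∈ (f 1).invtSubmodule := by
  obtain ⟨-, hW0, hW2⟩ := hW.prop
  have h1top := (hf.spectrum 1).iSup_eq_top
  have h0shift := ((weyl_iff_actsWithShift_left hq.ne_zero h1top).1 (hf.weyl 0)).inf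
    (B := fun _ => W) (fun _ => le_rfl) fun _ => hW0
  have h2shift := ((weyl_iff_actsWithShift_neg_right hq.ne_zero h1top).1 (hf.weyl 1)).inf
    (B := fun _ => W) (fun _ => le_rfl) fun _ => hW2
  have h1shift : ActsWithShift (fun i => qEigenspace q⁻¹ d (f 1) i ⊓ W) 0 (qWeight q⁻¹ d) (f 1) :=
    .of_le_eigenspace (fun _ => inf_le_left) 0
  have hne : ⨆ i, qEigenspace q⁻¹ d (f 1) i ⊓ W ≠ ⊥ := fun hbot =>
    ht (by rw [inf_comm, iSup_eq_bot.1 hbot t])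
  have hspan : ⨆ i, qEigenspace q⁻¹ d (f 1) i ⊓ W = W :=
    hW.eq_of_le ⟨hne, h0shift.iSup_mem_invtSubmodule, h2shift.iSup_mem_invtSubmodule⟩
      (iSup_le fun _ => inf_le_right)
  exact hspan ▸ h1shift.iSup_mem_invtSubmodule

lemma actsIrreducibly_zero_two [FiniteDimensional K V] (hf : WeylCycle q d f) (hq : IsGeneric q)
    (hirr : ActsIrreducibly (Set.range f)) : ActsIrreducibly {f 0, f 2} := by
  intro U hU
  by_contra! hne
  obtain ⟨W, hWU, hW⟩ := exists_minimal_le_of_wellFoundedLT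
    (fun W : Submodule K V => W ≠ ⊥ ∧ W ∈ (f 0).invtSubmodule ∧ W ∈ (f 2).invtSubmodule) U
    ⟨hne.1, hU _ (by simp), hU _ (by simp)⟩
  have hW' : Minimal (fun W => W ≠ ⊥ ∧ W ∈ (f 2).invtSubmodule ∧ W ∈ (f 0).invtSubmodule) W := by
    simpa only [and_comm] using hW
  obtain ⟨hbot, hW0, hW2⟩ := hW.prop
  obtain ⟨t, h0⟩ := (hf.spectrum 0).exists_isEndpoint hbot hW0
  obtain ⟨s, h2⟩ := (hf.spectrum 2).exists_isEndpoint hbot hW2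
  obtain rfl : t = s := le_antisymm (hf.endpoint_le hq h0 h2) ((hf.rotate 2).endpoint_le hq h2 h0)
  have hW1 : W ∈ (f 1).invtSubmodule :=
    hf.mem_invtSubmodule_one_of_minimal hq hW (hf.inf_qEigenspace_one_ne_bot hq h0 h2)
  have hW3 : W ∈ (f 3).invtSubmodule := (hf.rotate 2).mem_invtSubmodule_one_of_minimal hq hW'
    ((hf.rotate 2).inf_qEigenspace_one_ne_bot hq h2 h0)
  have hinv : ∀ i, W ∈ (f i).invtSubmodule := fun i => by
    fin_cases i
    exacts [hW0, hW1, hW2, hW3]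
  rcases hirr W (Set.forall_mem_range.2 hinv) with h | h
  · exact hbot h
  · exact hne.2 (top_le_iff.1 (h ▸ hWU))

lemma isQGeometricPair [FiniteDimensional K V] (hf : WeylCycle q d f) (hq : IsGeneric q)
    (hirr : ActsIrreducibly (Set.range f)) : IsQGeometricPair q d (f 0) (f 2) where
  spectrum_left := hf.spectrum 0
  spectrum_right := hf.spectrum 2
  serre_left := hf.serre hq 0
  serre_right := hf.serre hq 2
  irreducible := hf.actsIrreducibly_zero_two hq hirr

end WeylCycle

end Restriction

section Transport

variable {K V W : Type*} [Field K] [AddCommGroup V] [Module K V] [AddCommGroup W] [Module K W]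
  {q : K} {d : ℕ}

lemma eigenspace_conjAlgEquiv (σ : V ≃ₗ[K] W) (X : Module.End K V) (θ : K) :
    eigenspace (σ.conjAlgEquiv K X) θ = (eigenspace X θ).map σ.toLinearMap := by
  ext w
  rw [Submodule.mem_map_equiv, Module.End.mem_eigenspace_iff, Module.End.mem_eigenspace_iff,
    ← σ.symm.injective.eq_iff]
  simp [LinearEquiv.conjAlgEquiv_apply]

lemma HasQSpectrum.conjAlgEquiv {X : Module.End K V} (hX : HasQSpectrum q d X) (σ : V ≃ₗ[K] W) :
    HasQSpectrum q d (σ.conjAlgEquiv K X) where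
  iSup_eq_top := by
    simp only [qEigenspace, eigenspace_conjAlgEquiv, ← Submodule.map_iSup]
    exact (congrArg _ hX.iSup_eq_top).trans (Submodule.map_top _ |>.trans σ.range)
  ne_bot_iff i := by
    rw [← hX.ne_bot_iff i, qEigenspace, qEigenspace, eigenspace_conjAlgEquiv]
    exact (Submodule.map_eq_bot_iff (e := σ)).not

lemma WeylCycle.conjAlgEquiv {f : ZMod 4 → Module.End K V} (hf : WeylCycle q d f)
    (σ : V ≃ₗ[K] W) : WeylCycle q d fun i => σ.conjAlgEquiv K (f i) where
  weyl i := by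
    simpa only [Weyl, map_sub, map_smul, map_mul, map_one] using
      congrArg (σ.conjAlgEquiv K) (hf.weyl i)
  spectrum i := (hf.spectrum i).conjAlgEquiv σ

end Transport

section Representations

variable {F} {V W : Type} [AddCommGroup V] [Module F V] [AddCommGroup W] [Module F W] {q : F}
  {d d' : ℕ} {X : Module.End F V}

lemma image_qWeight_Icc (q : F) (d : ℕ) : qWeight q d '' Set.Icc 0 (d : ℤ) =
    {θ : F | ∃ n : ℕ, n ≤ d ∧ θ = q ^ ((d : ℤ) - 2 * (n : ℤ))} := by
  ext θ
  constructor
  · rintro ⟨i, ⟨hi0, hid⟩, rfl⟩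
    lift i to ℕ using hi0
    exact ⟨i, by omega, rfl⟩
  · rintro ⟨n, hn, rfl⟩
    exact ⟨n, ⟨by omega, by omega⟩, rfl⟩

lemma hasQSpectrum_iff (hq : IsGeneric q) : HasQSpectrum q d X ↔ SemisimpleOn F X ∧
    EigSet F X = {θ : F | ∃ n : ℕ, n ≤ d ∧ θ = q ^ ((d : ℤ) - 2 * (n : ℤ))} := by
  rw [← image_qWeight_Icc]
  constructor
  · refine fun hX => ⟨?_, Set.ext fun θ => ⟨fun hθ => ?_, ?_⟩⟩
    · exact top_le_iff.1 (hX.iSup_eq_top ▸ iSup_le fun i => le_iSup (eigenspace X) (qWeight q d i))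
    · obtain ⟨i, rfl⟩ := exists_eq_of_eigenspace_ne_bot hX.iSup_eq_top hθ
      exact Set.mem_image_of_mem _ ((hX.ne_bot_iff i).1 hθ)
    · rintro ⟨i, hi, rfl⟩
      exact (hX.ne_bot_iff i).2 hi
  · rintro ⟨htop, hset⟩
    refine ⟨top_le_iff.1 (htop.ge.trans (iSup_le fun θ => ?_)), fun i => ?_⟩
    · by_cases hθ : θ ∈ EigSet F X
      · obtain ⟨i, -, rfl⟩ := hset ▸ hθ
        exact le_iSup (qEigenspace q d X) i
      · exact (not_not.1 hθ).le.trans bot_le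
    · rw [← (hq.qWeight_injective d).mem_set_image, ← hset]
      rfl

namespace HasQSpectrum

lemma hasEigenvalue (hX : HasQSpectrum q d X) : X.HasEigenvalue (qWeight q d 0) :=
  (hX.ne_bot_iff 0).2 (by simp)

lemma nontrivial (hX : HasQSpectrum q d X) : Nontrivial V :=
  let ⟨v, _, hv⟩ := Submodule.exists_mem_ne_zero_of_ne_bot hX.hasEigenvalue
  ⟨v, 0, hv⟩

lemma not_isNilpotent (hX : HasQSpectrum q d X) (hq : q ≠ 0) : ¬ IsNilpotent X := fun h =>
  qWeight_ne_zero hq d 0 (hX.hasEigenvalue.isNilpotent_of_isNilpotent h).eq_zero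

lemma diameter_le (hX : HasQSpectrum q d X) (hX' : HasQSpectrum q d' X) (hq : IsGeneric q) :
    d ≤ d' := by
  obtain ⟨i, hi⟩ := exists_eq_of_eigenspace_ne_bot hX'.iSup_eq_top hX.hasEigenvalue
  have hmem : i ∈ Set.Icc 0 (d' : ℤ) := (hX'.ne_bot_iff i).1 (by
    rw [qEigenspace, hi]
    exact hX.hasEigenvalue)
  have hexp := hq hi
  have := hmem.1
  omega

end HasQSpectrum

lemma type1Diam_iff (hq : IsGeneric q) {π : BoxQ F q →ₐ[F] Module.End F V} :
    Type1Diam F q π d ↔ WeylCycle q d fun i => π (bx F q i) := by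
  refine ⟨fun h => ⟨fun i => ?_, fun i => (hasQSpectrum_iff hq).2 (h i)⟩,
    fun h i => (hasQSpectrum_iff hq).1 (h.spectrum i)⟩
  simpa only [Weyl, bx, map_sub, map_smul, map_mul, map_one] using
    congrArg π (RingQuot.mkAlgHom_rel F (BoxRel.rel1 (q := q) i))

lemma WeylCycle.exists_algHom {f : ZMod 4 → Module.End F V} (hf : WeylCycle q d f)
    (hq : IsGeneric q) : ∃ π : BoxQ F q →ₐ[F] Module.End F V, ∀ i, π (bx F q i) = f i := by
  refine ⟨RingQuot.liftAlgHom F ⟨FreeAlgebra.lift F f, ?_⟩, fun i => ?_⟩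
  · rintro _ _ (i | i)
    · simpa only [Weyl, map_sub, map_smul, map_mul, map_one, FreeAlgebra.lift_ι_apply] using
        hf.weyl i
    · simpa only [Serre, map_add, map_smul, map_mul, map_pow, FreeAlgebra.lift_ι_apply] using
        hf.serre hq i
  · rw [bx, RingQuot.liftAlgHom_mkAlgHom_apply, FreeAlgebra.lift_ι_apply]

lemma adjoin_range_mkAlgHom_ι {I : Type*} (r : FreeAlgebra F I → FreeAlgebra F I → Prop) :
    Algebra.adjoin F (Set.range fun i => RingQuot.mkAlgHom F r (ι F i)) = ⊤ := by
  rw [Set.range_comp' (RingQuot.mkAlgHom F r), ← AlgHom.map_adjoin, FreeAlgebra.adjoin_range_ι,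
    Algebra.map_top, AlgHom.range_eq_top]
  exact RingQuot.mkAlgHom_surjective F r

lemma adjoin_range_bx (q : F) : Algebra.adjoin F (Set.range (bx F q)) = ⊤ :=
  adjoin_range_mkAlgHom_ι (BoxRel F q)

lemma adjoin_ux_uy (q : F) : Algebra.adjoin F {ux F q, uy F q} = ⊤ := by
  rw [← adjoin_range_mkAlgHom_ι (UqpRel F q)]
  congr 1
  ext a
  simp [ux, uy, or_comm]

lemma isIrrep_iff {A : Type} [Ring A] [Algebra F A] {s : Set A} (hs : Algebra.adjoin F s = ⊤)
    {π : A →ₐ[F] Module.End F V} :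
    IsIrrep F π ↔ Nontrivial V ∧ ActsIrreducibly (π '' s) := by
  have hinv (U : Submodule F V) :
      (∀ f ∈ π '' s, U ∈ f.invtSubmodule) ↔ ∀ a, ∀ v ∈ U, π a v ∈ U := by
    refine ⟨fun h a => ?_, fun h => Set.forall_mem_image.2 fun a _ => h a⟩
    have ha : a ∈ Algebra.adjoin F s := hs ▸ Algebra.mem_top
    induction ha using Algebra.adjoin_induction with
    | mem a ha => exact h _ (Set.mem_image_of_mem π ha)
    | algebraMap c => simpa using fun v hv => U.smul_mem c hv
    | add a b _ _ iha ihb => simpa using fun v hv => add_mem (iha v hv) (ihb v hv)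
    | mul a b _ _ iha ihb => simpa using fun v hv => iha _ (ihb v hv)
  simp only [IsIrrep, ActsIrreducibly, hinv]

lemma box1_iff (hq : IsGeneric q) {π : BoxQ F q →ₐ[F] Module.End F V} :
    Box1 F q π ↔ ActsIrreducibly (Set.range fun i => π (bx F q i)) ∧
      ∃ d, WeylCycle q d fun i => π (bx F q i) := by
  rw [Box1, isIrrep_iff (adjoin_range_bx q), ← Set.range_comp]
  simp only [type1Diam_iff hq]
  refine ⟨fun h => ⟨h.1.2, h.2⟩, fun h => ⟨⟨?_, h.1⟩, h.2⟩⟩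
  obtain ⟨d, hf⟩ := h.2
  exact (hf.spectrum 0).nontrivial

lemma uqp11_iff (hq : IsGeneric q) {Φ : Uqp F q →ₐ[F] Module.End F V} :
    Uqp11 F q Φ ↔ ∃ d, IsQGeometricPair q d (Φ (ux F q)) (Φ (uy F q)) := by
  rw [Uqp11, isIrrep_iff (adjoin_ux_uy q), Set.image_pair]
  constructor
  · rintro ⟨⟨-, hirr⟩, -, -, d, hx, hy, hx', hy'⟩
    refine ⟨d, (hasQSpectrum_iff hq).2 ⟨hx, hx'⟩, (hasQSpectrum_iff hq).2 ⟨hy, hy'⟩, ?_, ?_, hirr⟩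
    · simpa only [Serre, ux, uy, map_add, map_smul, map_mul, map_pow] using
        congrArg Φ (RingQuot.mkAlgHom_rel F (UqpRel.relx (q := q)))
    · simpa only [Serre, ux, uy, map_add, map_smul, map_mul, map_pow] using
        congrArg Φ (RingQuot.mkAlgHom_rel F (UqpRel.rely (q := q)))
  · rintro ⟨d, h⟩
    have hx := (hasQSpectrum_iff hq).1 h.spectrum_left
    have hy := (hasQSpectrum_iff hq).1 h.spectrum_right
    exact ⟨⟨h.spectrum_left.nontrivial, h.irreducible⟩, h.spectrum_left.not_isNilpotent hq.ne_zero,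
      h.spectrum_right.not_isNilpotent hq.ne_zero, d, hx.1, hy.1, hx.2, hy.2⟩

lemma repIso_iff_exists_conjAlgEquiv {A : Type} [Ring A] [Algebra F A]
    {π : A →ₐ[F] Module.End F V} {π' : A →ₐ[F] Module.End F W} :
    RepIso F π π' ↔ ∃ σ : V ≃ₗ[F] W, ∀ a, σ.conjAlgEquiv F (π a) = π' a := by
  refine exists_congr fun σ => forall_congr' fun a =>
    ⟨fun h => LinearMap.ext fun w => ?_, fun h v => ?_⟩
  · simpa [LinearEquiv.conjAlgEquiv_apply] using h (σ.symm w)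
  · simp [← h, LinearEquiv.conjAlgEquiv_apply]

lemma repIso_of_repIso_zero_two {π : BoxQ F q →ₐ[F] Module.End F V}
    {π' : BoxQ F q →ₐ[F] Module.End F W} (hq : IsGeneric q)
    (hπ : Type1Diam F q π d) (hπ' : Type1Diam F q π' d') (σ : V ≃ₗ[F] W)
    (h0 : σ.conjAlgEquiv F (π (bx F q 0)) = π' (bx F q 0))
    (h2 : σ.conjAlgEquiv F (π (bx F q 2)) = π' (bx F q 2)) : RepIso F π π' := by
  have hf := ((type1Diam_iff hq).1 hπ).conjAlgEquiv σ
  have hg := (type1Diam_iff hq).1 hπ'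
  have hf0 : HasQSpectrum q d (π' (bx F q 0)) := h0 ▸ hf.spectrum 0
  obtain rfl : d = d' := le_antisymm (hf0.diameter_le (hg.spectrum 0) hq)
    ((hg.spectrum 0).diameter_le hf0 hq)
  have hgen := congrFun (hf.eq_of_eq_zero_of_eq_two hg hq h0 h2)
  have hcomp : (σ.conjAlgEquiv F).toAlgHom.comp π = π' :=
    AlgHom.ext_of_adjoin_eq_top (adjoin_range_bx q) (Set.forall_mem_range.2 hgen)
  exact repIso_iff_exists_conjAlgEquiv.2 ⟨σ, fun a => DFunLike.congr_fun hcomp a⟩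

end Representations

section Pullback

variable {F} {q : F} {V : Type} [AddCommGroup V] [Module F V] {κ : Uqp F q →ₐ[F] BoxQ F q}

lemma uqp11_comp [FiniteDimensional F V] (hq : IsGeneric q) (hκx : κ (ux F q) = bx F q 0)
    (hκy : κ (uy F q) = bx F q 2) {π : BoxQ F q →ₐ[F] Module.End F V} (hπ : Box1 F q π) :
    Uqp11 F q (π.comp κ) := by
  obtain ⟨hirr, d, hf⟩ := (box1_iff hq).1 hπ
  rw [uqp11_iff hq, AlgHom.comp_apply, AlgHom.comp_apply, hκx, hκy]
  exact ⟨d, hf.isQGeometricPair hq hirr⟩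

lemma exists_box1_comp_eq (hq : IsGeneric q) (hκx : κ (ux F q) = bx F q 0)
    (hκy : κ (uy F q) = bx F q 2) {Φ : Uqp F q →ₐ[F] Module.End F V} (hΦ : Uqp11 F q Φ) :
    ∃ π : BoxQ F q →ₐ[F] Module.End F V, Box1 F q π ∧ π.comp κ = Φ := by
  obtain ⟨d, h⟩ := (uqp11_iff hq).1 hΦ
  obtain ⟨f, hf, h0, h2⟩ := h.exists_weylCycle hq
  obtain ⟨π, hπ⟩ := hf.exists_algHom hq
  have hirr : ActsIrreducibly (Set.range f) := fun U hU => h.irreducible U (by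
    rintro g (rfl | rfl)
    exacts [h0 ▸ hU _ ⟨0, rfl⟩, h2 ▸ hU _ ⟨2, rfl⟩])
  refine ⟨π, (box1_iff hq).2 ?_, AlgHom.ext_of_adjoin_eq_top (adjoin_ux_uy q) ?_⟩
  · simp only [hπ]
    exact ⟨hirr, d, hf⟩
  · rintro a (rfl | rfl)
    · rw [AlgHom.comp_apply, hκx, hπ, h0]
    · rw [AlgHom.comp_apply, hκy, hπ, h2]

end Pullback

theorem stmt12_general (q : F) (hq0 : q ≠ 0) (hq1 : ∀ n : ℕ, 0 < n → q ^ n ≠ 1)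
    (κ : Uqp F q →ₐ[F] BoxQ F q)
    (hκx : κ (ux F q) = bx F q 0) (hκy : κ (uy F q) = bx F q 2) :
    (∀ (V : Type) [AddCommGroup V] [Module F V] [FiniteDimensional F V]
        (π : BoxQ F q →ₐ[F] Module.End F V),
        Box1 F q π → Uqp11 F q (π.comp κ)) ∧
    (∀ (V : Type) [AddCommGroup V] [Module F V] (W : Type) [AddCommGroup W] [Module F W]
        (π : BoxQ F q →ₐ[F] Module.End F V) (π' : BoxQ F q →ₐ[F] Module.End F W),
        (∃ d, Type1Diam F q π d) → (∃ d, Type1Diam F q π' d) →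
        (RepIso F (π.comp κ) (π'.comp κ) ↔ RepIso F π π')) ∧
    (∀ (V : Type) [AddCommGroup V] [Module F V]
        (Φ : Uqp F q →ₐ[F] Module.End F V), Uqp11 F q Φ →
        ∃ π : BoxQ F q →ₐ[F] Module.End F V, Box1 F q π ∧ π.comp κ = Φ) := by
  have hq : IsGeneric q := isGeneric_of_pow_ne_one hq0 hq1
  refine ⟨fun V _ _ _ π hπ => uqp11_comp hq hκx hκy hπ, ?_,
    fun V _ _ Φ hΦ => exists_box1_comp_eq hq hκx hκy hΦ⟩
  rintro V _ _ W _ _ π π' ⟨d, hπ⟩ ⟨d', hπ'⟩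
  refine ⟨fun h => ?_, fun ⟨σ, hσ⟩ => ⟨σ, fun a => hσ (κ a)⟩⟩
  obtain ⟨σ, hσ⟩ := repIso_iff_exists_conjAlgEquiv.1 h
  exact repIso_of_repIso_zero_two hq hπ hπ' σ (by simpa [hκx] using hσ (ux F q))
    (by simpa [hκy] using hσ (uy F q))

/-- Pullback along `κ` induces a bijection between isomorphism classes of
finite-dimensional irreducible type-1 `□_q`-modules and isomorphism classes of
NonNil finite-dimensional irreducible type-`(1,1)` `U_q^+`-modules. -/
theorem stmt12 [IsAlgClosed F] [CharZero F] (q : F) (hq0 : q ≠ 0)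
    (hq1 : ∀ n : ℕ, 0 < n → q ^ n ≠ 1)
    (κ : Uqp F q →ₐ[F] BoxQ F q)
    (hκx : κ (ux F q) = bx F q 0) (hκy : κ (uy F q) = bx F q 2) :
    (∀ (V : Type) [AddCommGroup V] [Module F V] [FiniteDimensional F V]
        (π : BoxQ F q →ₐ[F] Module.End F V),
        Box1 F q π → Uqp11 F q (π.comp κ)) ∧
    (∀ (V : Type) [AddCommGroup V] [Module F V] [FiniteDimensional F V]
        (W : Type) [AddCommGroup W] [Module F W] [FiniteDimensional F W]
        (π : BoxQ F q →ₐ[F] Module.End F V) (π' : BoxQ F q →ₐ[F] Module.End F W),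
        Box1 F q π → Box1 F q π' →
        (RepIso F (π.comp κ) (π'.comp κ) ↔ RepIso F π π')) ∧
    (∀ (V : Type) [AddCommGroup V] [Module F V] [FiniteDimensional F V]
        (Φ : Uqp F q →ₐ[F] Module.End F V), Uqp11 F q Φ →
        ∃ π : BoxQ F q →ₐ[F] Module.End F V, Box1 F q π ∧ π.comp κ = Φ) := by
  obtain ⟨hres, hiso, hlift⟩ := stmt12_general F q hq0 hq1 κ hκx hκy
  exact ⟨hres, fun V _ _ _ W _ _ _ π π' hπ hπ' => hiso V W π π' hπ.2 hπ'.2,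
    fun V _ _ _ => hlift V⟩
end
end
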